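/- arXiv:1706.03631 — 4 statements merged into one kernel-verified Lean document; each statement's English description precedes it below -/
import Mathlib

section
/- Let n ≥ 2, p = ⌊n/2⌋, and r = ⌊(3n−1)/2⌋. Let H : (Fin 3 → Fin n) → ℂ be the Hankel tensor of order 3 and dimension n whose parameter vector h ∈ ℂ^{3(n−1)+1} is given by h_l = 1 if l = r−1 and h_l = 0 otherwise; that is, H(i,j,k) = 1 if i+j+k = r−1 (0-based indices) and 0 otherwise. Let φ : (⋀^p ℂ^n) ⊗ ℂ^n → (⋀^{p+1} ℂ^n) ⊗ ℂ^n be the linear map (Koszul flattening of H) determined on basis elements by φ((e_{j_1} ∧ ⋯ ∧ e_{j_p}) ⊗ e_i) = Σ_{j,k} H(i,j,k) (e_{j_1} ∧ ⋯ ∧ e_{j_p} ∧ e_j) ⊗ e_k, where e_0, …, e_{n−1} is the standard basis of ℂ^n. Then the rank of φ (the dimension of its range) equals binom(n−1, p) · r. -/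
open scoped BigOperators
open MvPolynomial

noncomputable section

/-- An order-`m`, dimension-`n` complex tensor. -/
abbrev Tensor (m n : ℕ) := (Fin m → Fin n) → ℂ

/-- Tensors expressible as a sum of `r` rank-one tensors. -/
def cpSet (m n r : ℕ) : Set (Tensor m n) :=
  {T | ∃ u : Fin r → Fin m → Fin n → ℂ, ∀ i, T i = ∑ k, ∏ j, u k j (i j)}

/-- Tensors expressible as a sum of `r` symmetric rank-one tensors. -/
def symSet (m n r : ℕ) : Set (Tensor m n) :=
  {T | ∃ v : Fin r → Fin n → ℂ, ∀ i, T i = ∑ k, ∏ j, v k (i j)}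

/-- The Vandermonde vector `v(a,b) ∈ ℂ^n`, `v(a,b)_i = a^(n-1-i) * b^i`. -/
def vand (n : ℕ) (a b : ℂ) : Fin n → ℂ := fun i => a ^ (n - 1 - (i : ℕ)) * b ^ (i : ℕ)

/-- Tensors expressible as a sum of `r` Vandermonde rank-one tensors. -/
def vandSet (m n r : ℕ) : Set (Tensor m n) :=
  {T | ∃ ab : Fin r → ℂ × ℂ, ∀ i, T i = ∑ k, ∏ j, vand n (ab k).1 (ab k).2 (i j)}

/-- The cp rank of a tensor. -/
def cpRank {m n : ℕ} (T : Tensor m n) : ℕ := sInf {r | T ∈ cpSet m n r}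

/-- The symmetric rank of a tensor. -/
def symRank {m n : ℕ} (T : Tensor m n) : ℕ := sInf {r | T ∈ symSet m n r}

/-- The Vandermonde rank of a tensor. -/
def vandRank {m n : ℕ} (T : Tensor m n) : ℕ := sInf {r | T ∈ vandSet m n r}

/-- The border rank of a tensor (closure in the product topology). -/
def brank {m n : ℕ} (T : Tensor m n) : ℕ := sInf {r | T ∈ closure (cpSet m n r)}

/-- The symmetric border rank of a tensor. -/
def bSymRank {m n : ℕ} (T : Tensor m n) : ℕ := sInf {r | T ∈ closure (symSet m n r)}

/-- The border Vandermonde rank of a tensor. -/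
def bVandRank {m n : ℕ} (T : Tensor m n) : ℕ := sInf {r | T ∈ closure (vandSet m n r)}

/-- `T` is the Hankel tensor with parameter vector `h ∈ ℂ^{(n-1)m+1}`. -/
def IsHankel {m n : ℕ} (T : Tensor m n) (h : Fin ((n - 1) * m + 1) → ℂ) : Prop :=
  ∀ i : Fin m → Fin n, T i = h ⟨∑ j, (i j : ℕ), by
    have h1 : ∑ j, (i j : ℕ) ≤ ∑ _j : Fin m, (n - 1) :=
      Finset.sum_le_sum fun j _ => Nat.le_pred_of_lt (i j).isLt
    simp only [Finset.sum_const, Finset.card_univ, Fintype.card_fin, smul_eq_mul] at h1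
    exact Nat.lt_succ_of_le (h1.trans (le_of_eq (Nat.mul_comm m (n - 1))))⟩

/-- The `(d-r+1) × (r+1)` Hankel (catalecticant) matrix `C_{d-r,r}(h)` of `h ∈ ℂ^{d+1}`. -/
def hMat (d r : ℕ) (h : Fin (d + 1) → ℂ) : Matrix (Fin (d - r + 1)) (Fin (r + 1)) ℂ :=
  Matrix.of fun i j => if hij : (i : ℕ) + (j : ℕ) < d + 1 then h ⟨(i : ℕ) + (j : ℕ), hij⟩ else 0

/-- The binary form `f(x,y) = f_0 x^r + f_1 x^(r-1) y + ⋯ + f_r y^r`. -/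
def binForm (r : ℕ) (f : Fin (r + 1) → ℂ) : MvPolynomial (Fin 2) ℂ :=
  ∑ j : Fin (r + 1), C (f j) * X 0 ^ (r - (j : ℕ)) * X 1 ^ (j : ℕ)

/-- The binary form `h(x,y) = ∑_j binom(d,j) h_j x^j y^(d-j)` associated with `h ∈ ℂ^{d+1}`. -/
def assocForm (d : ℕ) (h : Fin (d + 1) → ℂ) : MvPolynomial (Fin 2) ℂ :=
  ∑ j : Fin (d + 1), C ((d.choose (j : ℕ) : ℂ) * h j) * X 0 ^ (j : ℕ) * X 1 ^ (d - (j : ℕ))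

/-- Parameter vectors of binary forms of Waring rank at most `r`. -/
def waringSet (d r : ℕ) : Set (Fin (d + 1) → ℂ) :=
  {h | ∃ ab : Fin r → ℂ × ℂ,
    assocForm d h = ∑ i, (C (ab i).1 * X 0 + C (ab i).2 * X 1) ^ d}

/-- The Waring rank of the binary form associated with `h`. -/
def waringRank (d : ℕ) (h : Fin (d + 1) → ℂ) : ℕ := sInf {r | h ∈ waringSet d r}

/-- The border Waring rank of the binary form associated with `h`. -/
def bWaringRank (d : ℕ) (h : Fin (d + 1) → ℂ) : ℕ := sInf {r | h ∈ closure (waringSet d r)}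

open TensorProduct in
/-- The wedge `v_0 ∧ ⋯ ∧ v_(p-1)` as an element of the `p`-th exterior power of `ℂ^n`. -/
def wedge (n p : ℕ) (v : Fin p → (Fin n → ℂ)) : ⋀[ℂ]^p (Fin n → ℂ) :=
  ⟨ExteriorAlgebra.ιMulti ℂ p v, ExteriorAlgebra.ιMulti_range ℂ p (Set.mem_range_self v)⟩

open TensorProduct in
/-- Shortcut instance, avoiding a typeclass-synthesis timeout. -/
noncomputable instance extTensorAddCommGroup (n p : ℕ) :
    AddCommGroup ((⋀[ℂ]^p (Fin n → ℂ)) ⊗[ℂ] (Fin n → ℂ)) :=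
  TensorProduct.addCommGroup

namespace ExteriorAlgebra

open scoped CliffordAlgebra

variable {R M : Type*} [CommRing R] [AddCommGroup M] [Module R M]

theorem ιMulti_snoc {k : ℕ} (w : Fin k → M) (m : M) :
    ιMulti R (k + 1) (Fin.snoc w m : Fin (k + 1) → M) = ιMulti R k w * ι R m := by
  simp only [ιMulti_apply, List.ofFn_succ', List.concat_eq_append, List.prod_append,
    Fin.snoc_castSucc, Fin.snoc_last, List.prod_singleton]

theorem mul_ι_mem {q : ℕ} {x : ExteriorAlgebra R M} (hx : x ∈ ⋀[R]^q M) (m : M) :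
    x * ι R m ∈ ⋀[R]^(q + 1) M := by
  rw [exteriorPower, pow_succ]
  exact Submodule.mul_mem_mul hx ⟨m, rfl⟩

theorem mul_ι_mul_ι_swap (x : ExteriorAlgebra R M) (m m' : M) :
    x * ι R m * ι R m' = -(x * ι R m' * ι R m) := by
  rw [mul_assoc, mul_assoc, ← mul_neg]
  congr 1
  exact eq_neg_of_add_eq_zero_left (ι_add_mul_swap m m')

/-- Right contraction of the exterior algebra by a linear form. -/
def contract (d : Module.Dual R M) : ExteriorAlgebra R M →ₗ[R] ExteriorAlgebra R M :=
  (CliffordAlgebra.contractRight (Q := (0 : QuadraticForm R M))).flip d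

theorem contract_mul_ι (d : Module.Dual R M) (x : ExteriorAlgebra R M) (m : M) :
    contract d (x * ι R m) = d m • x - contract d x * ι R m :=
  CliffordAlgebra.contractRight_mul_ι ..

theorem contract_eq_zero (d : Module.Dual R M) {x : ExteriorAlgebra R M}
    (hx : x ∈ ⋀[R]^0 M) : contract d x = 0 := by
  rw [exteriorPower, pow_zero, Submodule.mem_one] at hx
  obtain ⟨c, rfl⟩ := hx
  exact CliffordAlgebra.contractRight_algebraMap ..

@[elab_as_elim]
theorem exteriorPower_succ_induction {q : ℕ} {P : ExteriorAlgebra R M → Prop}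
    (mul : ∀ x ∈ ⋀[R]^q M, ∀ m, P (x * ι R m)) (add : ∀ x y, P x → P y → P (x + y))
    {x : ExteriorAlgebra R M} (hx : x ∈ ⋀[R]^(q + 1) M) : P x := by
  rw [exteriorPower, pow_succ] at hx
  refine Submodule.mul_induction_on hx ?_ add
  rintro x hx _ ⟨m, rfl⟩
  exact mul x hx m

theorem contract_mem (d : Module.Dual R M) {q : ℕ} {x : ExteriorAlgebra R M}
    (hx : x ∈ ⋀[R]^(q + 1) M) : contract d x ∈ ⋀[R]^q M := by
  induction q generalizing x with
  | zero =>
    refine exteriorPower_succ_induction (fun y hy m => ?_) (fun y z hy hz => ?_) hx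
    · rw [contract_mul_ι, contract_eq_zero d hy, zero_mul, sub_zero]
      exact Submodule.smul_mem _ _ hy
    · rw [map_add]
      exact Submodule.add_mem _ hy hz
  | succ q ih =>
    refine exteriorPower_succ_induction (fun y hy m => ?_) (fun y z hy hz => ?_) hx
    · rw [contract_mul_ι]
      exact Submodule.sub_mem _ (Submodule.smul_mem _ _ hy) (mul_ι_mem (ih hy) m)
    · rw [map_add]
      exact Submodule.add_mem _ hy hz

theorem sum_contract_mul_ι {I : Type*} [Fintype I] (b : Module.Basis I R M) {q : ℕ}
    {x : ExteriorAlgebra R M} (hx : x ∈ ⋀[R]^q M) :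
    ∑ i, contract (b.coord i) x * ι R (b i) = (q : R) • x := by
  induction q generalizing x with
  | zero => simp [contract_eq_zero _ hx]
  | succ q ih =>
    refine exteriorPower_succ_induction (fun y hy m => ?_) (fun y z hy hz => ?_) hx
    · have hm : ∑ i, (b.coord i m) • ι R (b i) = ι R m := by
        rw [← congrArg (ι R) (b.sum_repr m), map_sum]
        simp
      simp only [contract_mul_ι, sub_mul, Finset.sum_sub_distrib, smul_mul_assoc,
        mul_ι_mul_ι_swap _ m, Finset.sum_neg_distrib, ← Finset.sum_mul]
      simp only [← mul_smul_comm, ← Finset.mul_sum, hm, ih hy]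
      rw [smul_mul_assoc, sub_neg_eq_add, Nat.cast_succ, add_smul, one_smul, mul_add, mul_smul_comm,
        add_comm]
    · simp only [map_add, add_mul, Finset.sum_add_distrib, hy, hz, smul_add]

theorem eq_zero_of_forall_mul_ι_eq_zero {K W : Type*} [Field K] [CharZero K] [AddCommGroup W]
    [Module K W] [FiniteDimensional K W] {q : ℕ} (hq : q < Module.finrank K W)
    {x : ExteriorAlgebra K W} (hx : x ∈ ⋀[K]^q W) (h : ∀ m, x * ι K m = 0) : x = 0 := by
  let b := Module.finBasis K W
  have h1 : ∑ i, contract (b.coord i) (x * ι K (b i)) = 0 := by simp [h]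
  simp only [contract_mul_ι, Finset.sum_sub_distrib, sum_contract_mul_ι b hx] at h1
  simp only [Module.Basis.coord_apply, Module.Basis.repr_self, Finsupp.single_eq_same, one_smul,
    Finset.sum_const, Finset.card_univ, Fintype.card_fin, ← Nat.cast_smul_eq_nsmul K,
    ← sub_smul] at h1
  refine (smul_eq_zero.1 h1).resolve_left (sub_ne_zero.2 ?_)
  exact_mod_cast hq.ne'

theorem eq_zero_of_forall_mul_ιMulti_eq_zero {K W : Type*} [Field K] [CharZero K]
    [AddCommGroup W] [Module K W] [FiniteDimensional K W] {q k : ℕ}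
    (hqk : q + k ≤ Module.finrank K W) {x : ExteriorAlgebra K W} (hx : x ∈ ⋀[K]^q W)
    (h : ∀ w : Fin k → W, x * ιMulti K k w = 0) : x = 0 := by
  induction k generalizing q x with
  | zero => simpa using h 0
  | succ k ih =>
    refine eq_zero_of_forall_mul_ι_eq_zero (by lia) hx fun m => ?_
    refine ih (q := q + 1) (by lia) (mul_ι_mem hx m) fun w => ?_
    have := h (Matrix.vecCons m w)
    rwa [ιMulti_succ_apply, ← mul_assoc] at this

theorem exists_ιMulti_update_eq_ι_mul {k : ℕ} (w : Fin k → M) (i : Fin k) :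
    ∃ z : ExteriorAlgebra R M, ∀ m, ιMulti R k (Function.update w i m) = ι R m * z := by
  obtain _ | k := k
  · exact i.elim0
  let σ := Equiv.swap 0 i
  refine ⟨Equiv.Perm.sign σ • ιMulti R k (Matrix.vecTail (w ∘ σ)), fun m => ?_⟩
  have h := (ιMulti R (k + 1)).map_perm (Function.update w i m) σ
  rw [ιMulti_succ_apply] at h
  have h0 : (Function.update w i m ∘ σ) 0 = m := by simp [σ]
  have h1 : Matrix.vecTail (Function.update w i m ∘ σ) = Matrix.vecTail (w ∘ σ) := by
    funext l
    have : σ l.succ ≠ i := by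
      simpa [σ] using (Equiv.injective σ).ne (Fin.succ_ne_zero l)
    simp [Matrix.vecTail, Function.update_of_ne this]
  rw [h0, h1] at h
  rw [mul_smul_comm, h, smul_smul, Int.units_mul_self, one_smul]

theorem exists_ιMulti_update_eq_mul_ι {k : ℕ} (w : Fin (k + 1) → M) (i : Fin (k + 1)) :
    ∃ z ∈ ⋀[R]^k M, ∀ m, ιMulti R (k + 1) (Function.update w i m) = z * ι R m := by
  let σ := Equiv.swap (Fin.last k) i
  refine ⟨((Equiv.Perm.sign σ : ℤ) : R) • ιMulti R k (Fin.init (w ∘ σ)),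
    Submodule.smul_mem _ _ (ιMulti_range R k ⟨_, rfl⟩), fun m => ?_⟩
  have h := (ιMulti R (k + 1)).map_perm (Function.update w i m) σ
  have h1 : Function.update w i m ∘ σ = Fin.snoc (α := fun _ => M) (Fin.init (w ∘ σ)) m := by
    funext l
    refine Fin.lastCases ?_ (fun l => ?_) l
    · simp [σ]
    · have : σ l.castSucc ≠ i := by
        simpa [σ] using (Equiv.injective σ).ne (Fin.castSucc_lt_last l).ne
      simp [Fin.init, Function.update_of_ne this]
  rw [h1, ιMulti_snoc] at h
  rw [smul_mul_assoc, h, Int.cast_smul_eq_zsmul, ← Units.smul_def, smul_smul, Int.units_mul_self,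
    one_smul]

/-- Exterior multiplication on the right by a vector. -/
def wedgeRight (q : ℕ) (m : M) : ⋀[R]^q M →ₗ[R] ⋀[R]^(q + 1) M :=
  (LinearMap.mulRight R (ι R m)).restrict fun _ hx => mul_ι_mem hx m

/-- Right contraction by a linear form, on exterior powers. -/
def contractPower (q : ℕ) (d : Module.Dual R M) : ⋀[R]^(q + 1) M →ₗ[R] ⋀[R]^q M :=
  (contract d).restrict fun _ hx => contract_mem d hx

@[simp]
theorem coe_wedgeRight (q : ℕ) (m : M) (x : ⋀[R]^q M) :
    (wedgeRight q m x : ExteriorAlgebra R M) = x * ι R m := rfl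

@[simp]
theorem coe_contractPower (q : ℕ) (d : Module.Dual R M) (x : ⋀[R]^(q + 1) M) :
    (contractPower q d x : ExteriorAlgebra R M) = contract d x := rfl

theorem wedgeRight_comp_wedgeRight (q : ℕ) (m m' : M) :
    wedgeRight (R := R) (q + 1) m ∘ₗ wedgeRight q m' =
      -(wedgeRight (q + 1) m' ∘ₗ wedgeRight q m) := by
  ext1
  exact AlternatingMap.ext fun w => Subtype.ext (mul_ι_mul_ι_swap _ m' m)

theorem contractPower_comp_wedgeRight_zero (d : Module.Dual R M) (m : M) :
    contractPower 0 d ∘ₗ wedgeRight 0 m = d m • LinearMap.id := by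
  refine LinearMap.ext fun x => Subtype.ext ?_
  simp [contract_mul_ι, contract_eq_zero d x.2]

theorem contractPower_comp_wedgeRight (q : ℕ) (d : Module.Dual R M) (m : M) :
    contractPower (q + 1) d ∘ₗ wedgeRight (q + 1) m =
      d m • LinearMap.id - wedgeRight q m ∘ₗ contractPower q d := by
  refine LinearMap.ext fun x => Subtype.ext ?_
  simp [contract_mul_ι]

end ExteriorAlgebra

section Vanishing

variable {n k r : ℕ}

theorem sum_pow_mul_eq_zero_of_convolution_eq_zero (y : Fin r → Fin n → ℂ)
    (hy : ∀ d : Fin r, r - n ≤ d → ∀ j, y d j = 0)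
    (h : ∀ L < r, ∑ d : Fin r, ∑ j : Fin n, (if (d : ℕ) + j = L then y d j else 0) = 0) (t : ℂ) :
    ∑ d : Fin r, ∑ j : Fin n, t ^ ((d : ℕ) + j) * y d j = 0 := by
  have key : ∀ L, ∑ d : Fin r, ∑ j : Fin n, (if (d : ℕ) + j = L then y d j else 0) = 0 := by
    intro L
    by_cases hL : L < r
    · exact h L hL
    · refine Finset.sum_eq_zero fun d _ => Finset.sum_eq_zero fun j _ => ?_
      split_ifs with hdj
      · exact hy d (by lia) j
      · rfl
  have expand : ∀ (d : Fin r) (j : Fin n), t ^ ((d : ℕ) + j) * y d j =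
      ∑ L ∈ Finset.range (r + n), t ^ L * if (d : ℕ) + j = L then y d j else 0 := by
    intro d j
    simp only [mul_ite, mul_zero, Finset.sum_ite_eq, Finset.mem_range]
    rw [if_pos (by lia)]
  simp_rw [expand]
  rw [Finset.sum_congr rfl fun d _ => Finset.sum_comm, Finset.sum_comm]
  refine Finset.sum_eq_zero fun L _ => ?_
  simp only [← Finset.mul_sum, key, mul_zero]

/-- The point `(1, t, t², …)` of the moment curve. -/
def momentCurve (n : ℕ) (t : ℂ) : Fin n → ℂ := fun j => t ^ (j : ℕ)

theorem linearIndependent_momentCurve :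
    LinearIndependent ℂ fun i : Fin n => momentCurve n (i : ℕ) :=
  Matrix.linearIndependent_rows_of_det_ne_zero
    (A := Matrix.vandermonde fun i : Fin n => ((i : ℕ) : ℂ))
    (Matrix.det_vandermonde_ne_zero_iff.2 fun _ _ h => Fin.ext (Nat.cast_injective h))

/-- A basis consisting of points of the moment curve. -/
def momentBasis (n : ℕ) : Module.Basis (Fin n) ℂ (Fin n → ℂ) :=
  basisOfLinearIndependentOfCardEqFinrank' _ linearIndependent_momentCurve (by simp)

theorem momentBasis_apply (i : Fin n) : momentBasis n i = momentCurve n (i : ℕ) := by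
  rw [momentBasis, coe_basisOfLinearIndependentOfCardEqFinrank']

theorem eq_zero_of_sum_pow_mul_eq_zero (c : Fin r → ℂ) (hc : ∀ d : Fin r, k ≤ d → c d = 0)
    (t : Fin k → ℂ) (ht : Function.Injective t)
    (h : ∀ i, ∑ d : Fin r, t i ^ (d : ℕ) * c d = 0) (d : Fin r) : c d = 0 := by
  let P : Polynomial ℂ := ∑ d : Fin r, Polynomial.monomial (d : ℕ) (c d)
  have coeffP : ∀ m, P.coeff m = ∑ d : Fin r, if (d : ℕ) = m then c d else 0 := by
    intro m
    simp [P, Polynomial.coeff_monomial]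
  have hP : P = 0 := by
    refine Polynomial.eq_zero_of_degree_lt_of_eval_index_eq_zero (v := t) Finset.univ
      ht.injOn ?_ fun i _ => ?_
    · rw [Finset.card_univ, Fintype.card_fin, Polynomial.degree_lt_iff_coeff_zero]
      intro m hm
      rw [coeffP]
      refine Finset.sum_eq_zero fun d _ => ?_
      split_ifs with hd
      · exact hc d (by lia)
      · rfl
    · simp only [P, Polynomial.eval_finsetSum, Polynomial.eval_monomial]
      simpa only [mul_comm] using h i
  have := coeffP d
  simpa [hP, Fin.val_inj] using this.symm

/-- A polynomial family `∑ t ^ d • g d` of alternating `k`-forms of degree less than `k` that is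
annihilated by contraction with the moment curve vanishes. -/
theorem alternating_family_eq_zero (hk : r - n ≤ k)
    (g : Fin r → (Fin n → ℂ) [⋀^Fin k]→ₗ[ℂ] ℂ) (hg : ∀ d : Fin r, r - n ≤ d → g d = 0)
    (h : ∀ L < r, ∀ (w : Fin k → Fin n → ℂ) (i : Fin k), ∑ d : Fin r, ∑ j : Fin n,
      (if (d : ℕ) + j = L then g d (Function.update w i (Pi.single j 1)) else 0) = 0)
    (d : Fin r) : g d = 0 := by
  have curve : ∀ t w i, ∑ d : Fin r,
      t ^ (d : ℕ) * g d (Function.update w i (momentCurve n t)) = 0 := by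
    intro t w i
    have expand : ∀ d, g d (Function.update w i (momentCurve n t)) =
        ∑ j : Fin n, t ^ (j : ℕ) * g d (Function.update w i (Pi.single j 1)) := by
      intro d
      conv_lhs => rw [pi_eq_sum_univ' (momentCurve n t)]
      rw [AlternatingMap.map_update_sum]
      refine Finset.sum_congr rfl fun j _ => ?_
      rw [AlternatingMap.map_update_smul, smul_eq_mul]
      rfl
    simp_rw [expand, Finset.mul_sum, ← mul_assoc, ← pow_add]
    exact sum_pow_mul_eq_zero_of_convolution_eq_zero
      (fun d j => g d (Function.update w i (Pi.single j 1)))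
      (fun d hd j => by simp [hg d hd]) (fun L hL => h L hL w i) t
  refine (momentBasis n).ext_alternating fun s hs => ?_
  refine eq_zero_of_sum_pow_mul_eq_zero (k := k) (fun d => g d fun i => momentBasis n (s i))
    (fun d hd => by simp [hg d (hk.trans hd)]) (fun i => ((s i : ℕ) : ℂ))
    (fun i j hij => hs (Fin.ext (Nat.cast_injective hij))) (fun i => ?_) d
  have := curve (s i : ℕ) (fun i => momentBasis n (s i)) i
  rwa [← momentBasis_apply, Function.update_eq_self] at this

end Vanishing

section TruncatedKoszul

open TensorProduct ExteriorAlgebra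

variable (n r q : ℕ)

/-- The class of `X ^ l` in `ℂ[X] / (X ^ r)`, in coordinates. -/
def truncMonomial (l : ℕ) : Fin r → ℂ := fun i => if (i : ℕ) = l then 1 else 0

variable {r} in
theorem truncMonomial_coe (i : Fin r) : truncMonomial r i = Pi.single i 1 := by
  ext l
  simp [truncMonomial, Pi.single_apply, Fin.ext_iff]

variable {r} in
theorem truncMonomial_of_le {l : ℕ} (h : r ≤ l) : truncMonomial r l = 0 := by
  ext i
  exact if_neg (by lia)

/-- Multiplication by `X ^ j` on `ℂ[X] / (X ^ r)`, in coordinates. -/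
def shift (j : ℕ) : (Fin r → ℂ) →ₗ[ℂ] (Fin r → ℂ) :=
  (Pi.basisFun ℂ (Fin r)).constr ℂ fun d => truncMonomial r (d + j)

theorem shift_single (j : ℕ) (i : Fin r) :
    shift r j (Pi.single i 1) = truncMonomial r (i + j) := by
  rw [← Pi.basisFun_apply, shift, Module.Basis.constr_basis]

theorem shift_truncMonomial (j l : ℕ) :
    shift r j (truncMonomial r l) = truncMonomial r (l + j) := by
  obtain h | h := lt_or_ge l r
  · exact (congrArg _ (truncMonomial_coe ⟨l, h⟩)).trans (shift_single r j ⟨l, h⟩)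
  · rw [truncMonomial_of_le h, truncMonomial_of_le (h.trans (Nat.le_add_right l j)), map_zero]

theorem shift_comp_shift (i j : ℕ) : shift r i ∘ₗ shift r j = shift r (i + j) := by
  refine (Pi.basisFun ℂ (Fin r)).ext fun d => ?_
  simp [shift_single, shift_truncMonomial, add_comm i j, add_assoc]

theorem shift_zero : shift r 0 = LinearMap.id := by
  refine (Pi.basisFun ℂ (Fin r)).ext fun d => ?_
  simp [shift_single, truncMonomial_coe]

instance extTensorFunAddCommGroup :
    AddCommGroup ((⋀[ℂ]^q (Fin n → ℂ)) ⊗[ℂ] (Fin r → ℂ)) :=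
  TensorProduct.addCommGroup

/-- Exterior multiplication by `∑ X ^ j e_j` over `ℂ[X] / (X ^ r)`. -/
def koszul : (⋀[ℂ]^q (Fin n → ℂ)) ⊗[ℂ] (Fin r → ℂ) →ₗ[ℂ]
    (⋀[ℂ]^(q + 1) (Fin n → ℂ)) ⊗[ℂ] (Fin r → ℂ) :=
  ∑ j : Fin n, TensorProduct.map (wedgeRight q (Pi.single j 1)) (shift r j)

theorem koszul_tmul (x : ⋀[ℂ]^q (Fin n → ℂ)) (f : Fin r → ℂ) :
    koszul n r q (x ⊗ₜ f) = ∑ j : Fin n, wedgeRight q (Pi.single j 1) x ⊗ₜ shift r j f := by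
  simp [koszul, LinearMap.sum_apply]

theorem koszul_comp_koszul : koszul n r (q + 1) ∘ₗ koszul n r q = 0 := by
  refine TensorProduct.ext' fun x f => ?_
  let T (j i : Fin n) : (⋀[ℂ]^(q + 1 + 1) (Fin n → ℂ)) ⊗[ℂ] (Fin r → ℂ) :=
    wedgeRight (q + 1) (Pi.single i 1) (wedgeRight q (Pi.single j 1) x) ⊗ₜ
      shift r i (shift r j f)
  have hT : (koszul n r (q + 1) ∘ₗ koszul n r q) (x ⊗ₜ f) = ∑ j, ∑ i, T j i := by
    simp only [LinearMap.comp_apply, koszul_tmul, map_sum, T]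
  have anti : ∀ i j, T i j = -T j i := by
    intro i j
    have h1 := LinearMap.congr_fun (wedgeRight_comp_wedgeRight (R := ℂ) q
      (Pi.single j (1 : ℂ)) (Pi.single i (1 : ℂ))) x
    have h2 := LinearMap.congr_fun ((shift_comp_shift r j i).trans
      ((congrArg _ (add_comm _ _)).trans (shift_comp_shift r i j).symm)) f
    rw [LinearMap.comp_apply, LinearMap.neg_apply, LinearMap.comp_apply] at h1
    rw [LinearMap.comp_apply, LinearMap.comp_apply] at h2
    simp only [T]
    rw [h1, h2, TensorProduct.neg_tmul]
  have : ∑ i, ∑ j, T i j = -∑ i, ∑ j, T i j := by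
    conv_lhs => rw [Finset.sum_comm]
    simp only [← Finset.sum_neg_distrib]
    exact Finset.sum_congr rfl fun i _ => Finset.sum_congr rfl fun j _ => anti j i
  rw [hT, LinearMap.zero_apply]
  have two : (2 : ℂ) • ∑ i, ∑ j, T i j = 0 := by
    rw [two_smul]
    exact eq_neg_iff_add_eq_zero.1 this
  exact (smul_eq_zero.1 two).resolve_left two_ne_zero

variable {n} in
theorem sum_single_smul_tmul_shift [NeZero n] (x : ⋀[ℂ]^q (Fin n → ℂ)) (f : Fin r → ℂ) :
    ∑ j : Fin n, ((Pi.single j 1 : Fin n → ℂ) 0 • x) ⊗ₜ[ℂ] shift r j f = x ⊗ₜ f := by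
  rw [Finset.sum_eq_single 0 (fun j _ hj => by simp [hj.symm]) (by simp)]
  simp [shift_zero]

theorem koszul_contract_zero [NeZero n] :
    (contractPower 0 (LinearMap.proj (0 : Fin n))).rTensor (Fin r → ℂ) ∘ₗ koszul n r 0 =
      LinearMap.id := by
  refine TensorProduct.ext' fun x f => ?_
  have h (j : Fin n) := LinearMap.congr_fun (contractPower_comp_wedgeRight_zero
    (LinearMap.proj (R := ℂ) (φ := fun _ => ℂ) (0 : Fin n)) (Pi.single j 1)) x
  simp only [LinearMap.comp_apply, LinearMap.smul_apply, LinearMap.id_apply,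
    LinearMap.proj_apply] at h
  simp only [LinearMap.comp_apply, koszul_tmul, map_sum, LinearMap.rTensor_tmul, h,
    LinearMap.id_apply, sum_single_smul_tmul_shift]

theorem koszul_contract_succ [NeZero n] :
    (contractPower (q + 1) (LinearMap.proj (0 : Fin n))).rTensor (Fin r → ℂ) ∘ₗ
        koszul n r (q + 1) +
      koszul n r q ∘ₗ (contractPower q (LinearMap.proj (0 : Fin n))).rTensor (Fin r → ℂ) =
      LinearMap.id := by
  refine TensorProduct.ext' fun x f => ?_
  have h (j : Fin n) := LinearMap.congr_fun (contractPower_comp_wedgeRight q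
    (LinearMap.proj (R := ℂ) (φ := fun _ => ℂ) (0 : Fin n)) (Pi.single j 1)) x
  simp only [LinearMap.comp_apply, LinearMap.smul_apply, LinearMap.id_apply,
    LinearMap.proj_apply, LinearMap.sub_apply] at h
  simp only [LinearMap.add_apply, LinearMap.comp_apply, koszul_tmul, map_sum,
    LinearMap.rTensor_tmul, h, ← Finset.sum_add_distrib, ← TensorProduct.add_tmul,
    sub_add_cancel, LinearMap.id_apply, sum_single_smul_tmul_shift]

theorem range_koszul [NeZero n] :
    LinearMap.range (koszul n r q) = LinearMap.ker (koszul n r (q + 1)) := by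
  refine le_antisymm (LinearMap.range_le_ker_iff.2 (koszul_comp_koszul n r q)) fun x hx => ?_
  have h := LinearMap.congr_fun (koszul_contract_succ n r q) x
  rw [LinearMap.add_apply, LinearMap.comp_apply, LinearMap.mem_ker.1 hx, map_zero, zero_add] at h
  exact ⟨_, h⟩

theorem finrank_range_koszul (n : ℕ) :
    Module.finrank ℂ (LinearMap.range (koszul (n + 1) r q)) = n.choose q * r := by
  induction q with
  | zero =>
    have inj : Function.Injective (koszul (n + 1) r 0) :=
      Function.LeftInverse.injective (LinearMap.congr_fun (koszul_contract_zero (n + 1) r))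
    rw [LinearMap.finrank_range_of_inj inj, Module.finrank_tensorProduct, exteriorPower.finrank_eq]
    simp
  | succ q ih =>
    have h := LinearMap.finrank_range_add_finrank_ker (koszul (n + 1) r (q + 1))
    rw [← range_koszul, ih, Module.finrank_tensorProduct, exteriorPower.finrank_eq,
      Module.finrank_fin_fun, Module.finrank_fin_fun, Nat.choose_succ_succ, add_mul] at h
    lia

end TruncatedKoszul

section Flattening

open TensorProduct ExteriorAlgebra

variable (n r q : ℕ)

/-- Polynomials of degree less than `n` as elements of `ℂ[X] / (X ^ r)`, in coordinates. -/
def truncate : (Fin n → ℂ) →ₗ[ℂ] (Fin r → ℂ) :=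
  (Pi.basisFun ℂ (Fin n)).constr ℂ fun i => truncMonomial r i

/-- The coefficients of `X ^ (r - 1), …, X ^ (r - n)` of an element of `ℂ[X] / (X ^ r)`. -/
def topCoeffs : (Fin r → ℂ) →ₗ[ℂ] (Fin n → ℂ) :=
  (Pi.basisFun ℂ (Fin r)).constr ℂ fun d k => if (d : ℕ) + k + 1 = r then 1 else 0

theorem truncate_single (i : Fin n) : truncate n r (Pi.single i 1) = truncMonomial r i := by
  rw [← Pi.basisFun_apply, truncate, Module.Basis.constr_basis]

theorem topCoeffs_single (d : Fin r) :
    topCoeffs n r (Pi.single d 1) =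
      fun k : Fin n => if (d : ℕ) + k + 1 = r then (1 : ℂ) else 0 := by
  rw [← Pi.basisFun_apply, topCoeffs, Module.Basis.constr_basis]

theorem topCoeffs_truncMonomial (l : ℕ) :
    topCoeffs n r (truncMonomial r l) = fun k : Fin n => if l + k + 1 = r then 1 else 0 := by
  obtain h | h := lt_or_ge l r
  · exact (congrArg _ (truncMonomial_coe ⟨l, h⟩)).trans (topCoeffs_single n r ⟨l, h⟩)
  · rw [truncMonomial_of_le h, map_zero]
    ext k
    exact (if_neg (by lia)).symm

variable {n r q} in
/-- The coefficient of `X ^ d` of an element of `⋀^q ⊗ ℂ[X] / (X ^ r)`. -/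
def tensorCoeff (d : Fin r) : (⋀[ℂ]^q (Fin n → ℂ)) ⊗[ℂ] (Fin r → ℂ) →ₗ[ℂ]
    ⋀[ℂ]^q (Fin n → ℂ) :=
  LinearMap.proj d ∘ₗ (TensorProduct.piScalarRight ℂ ℂ (⋀[ℂ]^q (Fin n → ℂ)) (Fin r)).toLinearMap

variable {n r q} in
theorem tensorCoeff_tmul (d : Fin r) (x : ⋀[ℂ]^q (Fin n → ℂ)) (f : Fin r → ℂ) :
    tensorCoeff d (x ⊗ₜ f) = f d • x := by
  simp [tensorCoeff]

variable {n r q} in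
theorem eq_zero_of_tensorCoeff_eq_zero {x : (⋀[ℂ]^q (Fin n → ℂ)) ⊗[ℂ] (Fin r → ℂ)}
    (h : ∀ d, tensorCoeff d x = 0) : x = 0 :=
  (TensorProduct.piScalarRight ℂ ℂ (⋀[ℂ]^q (Fin n → ℂ)) (Fin r)).map_eq_zero_iff.1 (funext h)

theorem topCoeffs_apply (f : Fin r → ℂ) (k : Fin n) :
    topCoeffs n r f k = ∑ d : Fin r, if (d : ℕ) + k + 1 = r then f d else 0 := by
  simp [topCoeffs, Module.Basis.constr_apply_fintype]

theorem shift_apply (j : ℕ) (f : Fin r → ℂ) (L : Fin r) :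
    shift r j f L = ∑ d : Fin r, if (d : ℕ) + j = L then f d else 0 := by
  simp [shift, Module.Basis.constr_apply_fintype, truncMonomial, eq_comm]

theorem tensorCoeff_topCoeffs (k : Fin n) (x : (⋀[ℂ]^q (Fin n → ℂ)) ⊗[ℂ] (Fin r → ℂ)) :
    tensorCoeff k ((topCoeffs n r).lTensor _ x) =
      ∑ d : Fin r, if (d : ℕ) + k + 1 = r then tensorCoeff d x else 0 := by
  induction x with
  | zero => simp
  | tmul x f =>
    simp only [LinearMap.lTensor_tmul, tensorCoeff_tmul, topCoeffs_apply, Finset.sum_smul,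
      ite_smul, zero_smul]
  | add x y hx hy =>
    simp only [map_add, hx, hy, ← Finset.sum_add_distrib]
    exact Finset.sum_congr rfl fun d _ => by split_ifs <;> simp

theorem tensorCoeff_koszul (L : Fin r) (x : (⋀[ℂ]^q (Fin n → ℂ)) ⊗[ℂ] (Fin r → ℂ)) :
    tensorCoeff L (koszul n r q x) = ∑ d : Fin r, ∑ j : Fin n,
      if (d : ℕ) + j = L then wedgeRight q (Pi.single j 1) (tensorCoeff d x) else 0 := by
  induction x with
  | zero => simp
  | tmul x f =>
    rw [Finset.sum_comm]
    simp only [koszul_tmul, map_sum, tensorCoeff_tmul, shift_apply, Finset.sum_smul, ite_smul,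
      zero_smul, map_smul]
  | add x y hx hy =>
    simp only [map_add, hx, hy, ← Finset.sum_add_distrib]
    exact Finset.sum_congr rfl fun d _ => Finset.sum_congr rfl fun j _ => by split_ifs <;> simp

variable {n r q}

theorem eq_zero_of_koszul_eq_zero_of_topCoeffs_eq_zero {k : ℕ} (hqk : q + k ≤ n)
    (hk : r - n ≤ k) {x : (⋀[ℂ]^q (Fin n → ℂ)) ⊗[ℂ] (Fin r → ℂ)} (hx : koszul n r q x = 0)
    (htop : (topCoeffs n r).lTensor _ x = 0) : x = 0 := by
  have vanish : ∀ d : Fin r, r - n ≤ d → tensorCoeff d x = 0 := by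
    intro d hd
    have h := tensorCoeff_topCoeffs n r q ⟨r - 1 - d, by lia⟩ x
    rw [htop, map_zero, Finset.sum_eq_single d (fun e _ he => if_neg ?_) (by simp),
      if_pos (by simp only; lia)] at h
    · exact h.symm
    · simp only
      have := Fin.val_ne_of_ne he
      lia
  refine eq_zero_of_tensorCoeff_eq_zero fun d => Subtype.ext ?_
  refine eq_zero_of_forall_mul_ιMulti_eq_zero (k := k) (by simpa using hqk)
    (tensorCoeff d x).2 fun w => ?_
  refine (Module.forall_dual_apply_eq_zero_iff ℂ _).1 fun ℓ => ?_
  let g (d : Fin r) : (Fin n → ℂ) [⋀^Fin k]→ₗ[ℂ] ℂ :=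
    (ℓ ∘ₗ LinearMap.mulLeft ℂ (tensorCoeff d x : ExteriorAlgebra ℂ (Fin n → ℂ))
      ).compAlternatingMap (ιMulti ℂ k)
  have hg : ∀ d, g d = 0 := by
    refine alternating_family_eq_zero hk g (fun d hd => ?_) fun L hL w i => ?_
    · ext w
      simp [g, vanish d hd]
    · obtain ⟨z, hz⟩ := exists_ιMulti_update_eq_ι_mul (R := ℂ) w i
      have h := congrArg (fun y : ⋀[ℂ]^(q + 1) (Fin n → ℂ) =>
        ℓ ((y : ExteriorAlgebra ℂ (Fin n → ℂ)) * z)) (tensorCoeff_koszul n r q ⟨L, hL⟩ x)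
      simp only [hx, map_zero, ZeroMemClass.coe_zero, zero_mul, AddSubmonoidClass.coe_finsetSum,
        Finset.sum_mul, map_sum] at h
      refine Eq.trans ?_ h.symm
      refine Finset.sum_congr rfl fun d _ => Finset.sum_congr rfl fun j _ => ?_
      split_ifs <;> simp [g, hz, mul_assoc]
  exact DFunLike.congr_fun (hg d) w

theorem dual_eq_zero_of_comp_koszul_eq_zero (hq : r - n ≤ q + 1)
    (μ : (⋀[ℂ]^(q + 1) (Fin n → ℂ)) ⊗[ℂ] (Fin r → ℂ) →ₗ[ℂ] ℂ) (hμ : μ ∘ₗ koszul n r q = 0)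
    (htrunc : μ ∘ₗ (truncate n r).lTensor _ = 0) : μ = 0 := by
  let g (d : Fin r) : (Fin n → ℂ) [⋀^Fin (q + 1)]→ₗ[ℂ] ℂ :=
    (μ ∘ₗ (TensorProduct.mk ℂ _ _).flip (truncMonomial r (r - 1 - d))).compAlternatingMap
      (exteriorPower.ιMulti ℂ (q + 1))
  have hg : ∀ d, g d = 0 := by
    refine alternating_family_eq_zero hq g (fun d hd => ?_) fun L hL w i => ?_
    · ext w
      have h := LinearMap.congr_fun htrunc (exteriorPower.ιMulti ℂ (q + 1) w ⊗ₜ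
        Pi.single (⟨r - 1 - d, by lia⟩ : Fin n) 1)
      rwa [LinearMap.comp_apply, LinearMap.lTensor_tmul, truncate_single] at h
    · obtain ⟨z, hz, hzw⟩ := exists_ιMulti_update_eq_mul_ι (R := ℂ) w i
      have hzw' (m : Fin n → ℂ) : exteriorPower.ιMulti ℂ (q + 1) (Function.update w i m) =
          wedgeRight q m ⟨z, hz⟩ := Subtype.ext (hzw m)
      have h := LinearMap.congr_fun hμ (⟨z, hz⟩ ⊗ₜ truncMonomial r (r - 1 - L))
      simp only [LinearMap.comp_apply, koszul_tmul, shift_truncMonomial, map_sum,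
        LinearMap.zero_apply] at h
      rw [Finset.sum_comm]
      refine Eq.trans ?_ h
      refine Finset.sum_congr rfl fun j _ => ?_
      have hgd (d : Fin r) : g d (Function.update w i (Pi.single j 1)) =
          μ (wedgeRight q (Pi.single j 1) ⟨z, hz⟩ ⊗ₜ truncMonomial r (r - 1 - d)) := by
        rw [← hzw']
        rfl
      simp only [hgd]
      obtain hj | hj := le_or_gt (j : ℕ) L
      · rw [Finset.sum_eq_single ⟨L - j, by lia⟩ (fun e _ he => if_neg ?_) (by simp),
          if_pos (Nat.sub_add_cancel hj)]
        · congr 3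
          simp only
          lia
        · have := Fin.val_ne_of_ne he
          simp only at this
          lia
      · rw [truncMonomial_of_le (l := r - 1 - L + j) (by lia), tmul_zero, map_zero]
        exact Finset.sum_eq_zero fun d _ => if_neg (by lia)
  have key : (TensorProduct.mk ℂ _ _).flip.compr₂ μ = 0 := by
    refine (Pi.basisFun ℂ (Fin r)).ext fun l => exteriorPower.linearMap_ext ?_
    have h := hg l.rev
    have hl : r - 1 - (l.rev : ℕ) = l := by
      rw [Fin.val_rev]
      lia
    simp only [g, hl, truncMonomial_coe] at h
    rw [Pi.basisFun_apply]
    exact h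
  exact TensorProduct.ext' fun x f => LinearMap.congr_fun₂ key f x

theorem range_koszul_comp_truncate (hq : r - n ≤ q + 1) :
    LinearMap.range (koszul n r (q + 1) ∘ₗ (truncate n r).lTensor _) =
      LinearMap.range (koszul n r (q + 1)) := by
  refine le_antisymm (LinearMap.range_comp_le_range _ _) ?_
  rintro _ ⟨x, rfl⟩
  by_contra hx
  obtain ⟨f, hfx, hf⟩ := Submodule.exists_dual_map_eq_bot_of_notMem hx inferInstance
  have := dual_eq_zero_of_comp_koszul_eq_zero hq (f ∘ₗ koszul n r (q + 1))
    (by rw [LinearMap.comp_assoc, koszul_comp_koszul, LinearMap.comp_zero])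
    (LinearMap.ext fun y =>
      (Submodule.mem_bot ℂ).1 (hf ▸ Submodule.mem_map_of_mem ⟨y, rfl⟩))
  exact hfx (LinearMap.congr_fun this x)

theorem finrank_range_flattening (n r q : ℕ) (hlow : r - (n + 1) ≤ q + 1)
    (hhigh : r - (n + 1) + (q + 2) ≤ n + 1) :
    Module.finrank ℂ (LinearMap.range ((topCoeffs (n + 1) r).lTensor _ ∘ₗ
      koszul (n + 1) r (q + 1) ∘ₗ (truncate (n + 1) r).lTensor _)) = n.choose (q + 1) * r := by
  rw [LinearMap.range_comp, range_koszul_comp_truncate hlow, ← finrank_range_koszul]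
  have inj : Function.Injective (((topCoeffs (n + 1) r).lTensor _).domRestrict
      (LinearMap.range (koszul (n + 1) r (q + 1)))) := by
    rw [← LinearMap.ker_eq_bot, LinearMap.ker_eq_bot']
    rintro ⟨_, y, rfl⟩ hy
    exact Subtype.ext (eq_zero_of_koszul_eq_zero_of_topCoeffs_eq_zero
      (k := r - (n + 1)) (by lia) le_rfl (LinearMap.congr_fun (koszul_comp_koszul _ _ _) y) hy)
  rw [← LinearMap.finrank_range_of_inj inj, LinearMap.range_domRestrict]

end Flattening

section KoszulFlattening

open TensorProduct ExteriorAlgebra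

theorem wedge_snoc {n p : ℕ} (v : Fin p → Fin n → ℂ) (m : Fin n → ℂ) :
    wedge n (p + 1) (Fin.snoc v m) = wedgeRight p m (wedge n p v) :=
  Subtype.ext (ιMulti_snoc v m)

theorem linearMap_ext_wedge_single {n p : ℕ} {W : Type*} [AddCommGroup W] [Module ℂ W]
    {φ ψ : (⋀[ℂ]^p (Fin n → ℂ)) ⊗[ℂ] (Fin n → ℂ) →ₗ[ℂ] W}
    (h : ∀ (js : Fin p → Fin n) (i : Fin n),
      φ (wedge n p (fun t => Pi.single (js t) 1) ⊗ₜ Pi.single i 1) =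
        ψ (wedge n p (fun t => Pi.single (js t) 1) ⊗ₜ Pi.single i 1)) : φ = ψ := by
  have key : (TensorProduct.mk ℂ _ _).flip.compr₂ φ = (TensorProduct.mk ℂ _ _).flip.compr₂ ψ := by
    refine (Pi.basisFun ℂ (Fin n)).ext fun i => exteriorPower.linearMap_ext ?_
    refine Module.Basis.ext_alternating (Pi.basisFun ℂ (Fin n)) fun js _ => ?_
    simp only [Pi.basisFun_apply]
    exact h js i
  exact TensorProduct.ext' fun x f => LinearMap.congr_fun₂ key f x

theorem flattening_wedge_single {n p : ℕ} (r : ℕ) (js : Fin p → Fin n) (i : Fin n) :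
    ((topCoeffs n r).lTensor _ ∘ₗ koszul n r p ∘ₗ (truncate n r).lTensor _)
        (wedge n p (fun t => Pi.single (js t) 1) ⊗ₜ Pi.single i 1) =
      ∑ j : Fin n, ∑ k : Fin n, (if (i + j + k + 1 : ℕ) = r then (1 : ℂ) else 0) •
        (wedge n (p + 1) (Fin.snoc (fun t => (Pi.single (js t) 1 : Fin n → ℂ)) (Pi.single j 1)) ⊗ₜ
          (Pi.single k 1 : Fin n → ℂ)) := by
  simp only [LinearMap.comp_apply, LinearMap.lTensor_tmul, truncate_single, koszul_tmul, map_sum,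
    shift_truncMonomial, topCoeffs_truncMonomial]
  refine Finset.sum_congr rfl fun j _ => ?_
  rw [wedge_snoc, pi_eq_sum_univ' (fun k : Fin n => if (i + j + k + 1 : ℕ) = r then (1 : ℂ) else 0),
    tmul_sum]
  refine Finset.sum_congr rfl fun k _ => ?_
  rw [tmul_smul]

end KoszulFlattening

open TensorProduct in
/-- The Koszul flattening `φ` of the special Hankel tensor
`H(i,j,k) = 1` iff `i+j+k = r-1` (0-based) has rank `binom(n-1,p)·r`, where
`p = ⌊n/2⌋` and `r = ⌊(3n-1)/2⌋`. -/
theorem stmt_15 (n : ℕ) (hn : 2 ≤ n)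
    (H : Tensor 3 n)
    (hH : ∀ i : Fin 3 → Fin n,
      H i = if (∑ j, (i j : ℕ)) = (3 * n - 1) / 2 - 1 then 1 else 0)
    (φ : ((⋀[ℂ]^(n / 2) (Fin n → ℂ)) ⊗[ℂ] (Fin n → ℂ)) →ₗ[ℂ]
         ((⋀[ℂ]^(n / 2 + 1) (Fin n → ℂ)) ⊗[ℂ] (Fin n → ℂ)))
    (hφ : ∀ (js : Fin (n / 2) → Fin n) (i : Fin n),
      φ ((wedge n (n / 2) fun t => (Pi.single (js t) 1 : Fin n → ℂ)) ⊗ₜ[ℂ]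
          (Pi.single i 1 : Fin n → ℂ))
        = ∑ j : Fin n, ∑ k : Fin n, H ![i, j, k] •
            ((wedge n (n / 2 + 1)
                (Fin.snoc (fun t => (Pi.single (js t) 1 : Fin n → ℂ))
                  (Pi.single j 1))) ⊗ₜ[ℂ] (Pi.single k 1 : Fin n → ℂ))) :
    Module.finrank ℂ (LinearMap.range φ) = (n - 1).choose (n / 2) * ((3 * n - 1) / 2) := by
  have hφ' : φ = (topCoeffs n ((3 * n - 1) / 2)).lTensor _ ∘ₗ koszul n ((3 * n - 1) / 2) (n / 2) ∘ₗ
      (truncate n ((3 * n - 1) / 2)).lTensor _ := by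
    refine linearMap_ext_wedge_single fun js i => ?_
    rw [hφ, flattening_wedge_single]
    refine Finset.sum_congr rfl fun j _ => Finset.sum_congr rfl fun k _ => ?_
    rw [hH]
    congr 1
    refine if_congr ?_ rfl rfl
    simp only [Fin.sum_univ_three, Matrix.cons_val]
    lia
  rw [hφ']
  obtain ⟨q, hq⟩ : ∃ q, n / 2 = q + 1 := ⟨n / 2 - 1, by lia⟩
  obtain ⟨N, rfl⟩ : ∃ N, n = N + 1 := ⟨n - 1, by lia⟩
  rw [hq]
  exact finrank_range_flattening N _ q (by lia) (by lia)
end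
end

section
/- Let n ≥ 2. There exists a nonzero polynomial P in 3(n−1)+1 complex variables such that for every Hankel tensor H of order 3 and dimension n whose parameter vector h satisfies P(h) ≠ 0, one has brank(H) = brank_S(H) = rank(H) = rank_S(H) = rank_V(H) = ⌊(3n−1)/2⌋. -/
open scoped BigOperators
open MvPolynomial

noncomputable section

/-! ### Sylvester's algorithm for sequences -/

/-- The `R × R` Hankel matrix of a sequence. -/
def hankelMatrix {A : Type*} (s : ℕ → A) (R : ℕ) : Matrix (Fin R) (Fin R) A :=
  Matrix.of fun i j => s (i + j)

/-- The coefficients, up to the factor `det (hankelMatrix s R)`, of the linear recurrence of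
order `R` satisfied by the first `2 * R` terms of `s`. -/
def recurrenceCoeff {A : Type*} [CommRing A] (s : ℕ → A) (R : ℕ) : Fin R → A :=
  (hankelMatrix s R).adjugate.mulVec fun i => s (i + R)

/-- The characteristic polynomial of that recurrence, with leading coefficient
`det (hankelMatrix s R)`. -/
def recurrencePoly {A : Type*} [CommRing A] (s : ℕ → A) (R : ℕ) : Polynomial A :=
  Polynomial.C (hankelMatrix s R).det * Polynomial.X ^ R
    - ∑ j : Fin R, Polynomial.C (recurrenceCoeff s R j) * Polynomial.X ^ (j : ℕ)

/-- The resultant of the recurrence polynomial and its derivative. -/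
def recurrenceDiscr {A : Type*} [CommRing A] (s : ℕ → A) (R : ℕ) : A :=
  (recurrencePoly s R).resultant (Polynomial.derivative (recurrencePoly s R)) R (R - 1)

lemma map_det_hankelMatrix {A B : Type*} [CommRing A] [CommRing B] (φ : A →+* B) (s : ℕ → A)
    (R : ℕ) : φ (hankelMatrix s R).det = (hankelMatrix (fun i => φ (s i)) R).det :=
  φ.map_det _

lemma map_recurrenceCoeff {A B : Type*} [CommRing A] [CommRing B] (φ : A →+* B) (s : ℕ → A)
    (R : ℕ) (j : Fin R) :
    φ (recurrenceCoeff s R j) = recurrenceCoeff (fun i => φ (s i)) R j := by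
  have h := φ.map_adjugate (hankelMatrix s R)
  have h' : ∀ k, φ ((hankelMatrix s R).adjugate j k)
      = (hankelMatrix (fun i => φ (s i)) R).adjugate j k := fun k => congrFun (congrFun h j) k
  simp [recurrenceCoeff, Matrix.mulVec, dotProduct, h']

lemma map_recurrencePoly {A B : Type*} [CommRing A] [CommRing B] (φ : A →+* B) (s : ℕ → A)
    (R : ℕ) : (recurrencePoly s R).map φ = recurrencePoly (fun i => φ (s i)) R := by
  simp only [recurrencePoly, Polynomial.map_sub, Polynomial.map_mul, Polynomial.map_sum,
    Polynomial.map_pow, Polynomial.map_C, Polynomial.map_X]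
  simp only [map_recurrenceCoeff φ, map_det_hankelMatrix φ]

lemma map_recurrenceDiscr {A B : Type*} [CommRing A] [CommRing B] (φ : A →+* B) (s : ℕ → A)
    (R : ℕ) : φ (recurrenceDiscr s R) = recurrenceDiscr (fun i => φ (s i)) R := by
  rw [recurrenceDiscr, recurrenceDiscr, ← map_recurrencePoly, Polynomial.derivative_map,
    Polynomial.resultant_map_map]

lemma sum_mul_recurrenceCoeff {A : Type*} [CommRing A] (s : ℕ → A) (R : ℕ) (i : Fin R) :
    ∑ j : Fin R, s (i + j) * recurrenceCoeff s R j = (hankelMatrix s R).det * s (i + R) := by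
  have h : (hankelMatrix s R).mulVec (recurrenceCoeff s R)
      = (hankelMatrix s R).det • fun i : Fin R => s (i + R) := by
    rw [recurrenceCoeff, Matrix.mulVec_mulVec, Matrix.mul_adjugate, Matrix.smul_mulVec,
      Matrix.one_mulVec]
  exact congrFun h i

lemma eval_recurrencePoly {A : Type*} [CommRing A] (s : ℕ → A) (R : ℕ) (x : A) :
    (recurrencePoly s R).eval x = (hankelMatrix s R).det * x ^ R
      - ∑ j : Fin R, recurrenceCoeff s R j * x ^ (j : ℕ) := by
  simp [recurrencePoly, Polynomial.eval_finsetSum]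

lemma degree_recurrencePoly {A : Type*} [CommRing A] {s : ℕ → A} {R : ℕ}
    (hdet : (hankelMatrix s R).det ≠ 0) : (recurrencePoly s R).degree = R := by
  rw [recurrencePoly, Polynomial.degree_sub_eq_left_of_degree_lt,
    Polynomial.degree_C_mul_X_pow _ hdet]
  rw [Polynomial.degree_C_mul_X_pow _ hdet]
  exact Polynomial.degree_sum_fin_lt _

lemma recurrenceDiscr_ne_zero_iff {s : ℕ → ℂ} {R : ℕ} (hR : 0 < R)
    (hdet : (hankelMatrix s R).det ≠ 0) :
    recurrenceDiscr s R ≠ 0 ↔ (recurrencePoly s R).Separable := by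
  have hdeg : (recurrencePoly s R).natDegree = R :=
    Polynomial.natDegree_eq_of_degree_eq_some (degree_recurrencePoly hdet)
  have hf0 : recurrencePoly s R ≠ 0 := by
    intro h
    rw [h, Polynomial.natDegree_zero] at hdeg
    omega
  have hdeg' : (Polynomial.derivative (recurrencePoly s R)).natDegree = R - 1 := by
    rw [Polynomial.natDegree_derivative, hdeg]
  have h := Polynomial.resultant_eq_zero_iff (f := recurrencePoly s R)
    (g := Polynomial.derivative (recurrencePoly s R))
  rw [hdeg, hdeg'] at h
  rw [recurrenceDiscr, Ne, h, Polynomial.Separable]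
  tauto

lemma exists_sum_mul_pow_of_separable {s : ℕ → ℂ} {R : ℕ}
    (hdet : (hankelMatrix s R).det ≠ 0) (hsep : (recurrencePoly s R).Separable) :
    ∃ c t : Fin R → ℂ, ∀ i < 2 * R, s i = ∑ k, c k * t k ^ i := by
  have hdeg : (recurrencePoly s R).natDegree = R :=
    Polynomial.natDegree_eq_of_degree_eq_some (degree_recurrencePoly hdet)
  have hcard : (recurrencePoly s R).roots.toFinset.card = R := by
    rw [Multiset.toFinset_card_of_nodup (Polynomial.nodup_roots hsep),
      ← (IsAlgClosed.splits _).natDegree_eq_card_roots, hdeg]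
  set e := Finset.equivFinOfCardEq hcard
  set t : Fin R → ℂ := fun k => e.symm k
  have ht : Function.Injective t := Subtype.val_injective.comp e.symm.injective
  have hroot : ∀ k, (hankelMatrix s R).det * t k ^ R
      = ∑ j : Fin R, recurrenceCoeff s R j * t k ^ (j : ℕ) := fun k => by
    have h := (e.symm k).2
    rw [Multiset.mem_toFinset] at h
    have h' := Polynomial.isRoot_of_mem_roots h
    rw [Polynomial.IsRoot, eval_recurrencePoly, sub_eq_zero] at h'
    exact h'
  have hV : IsUnit (Matrix.vandermonde t) :=
    (Matrix.isUnit_iff_isUnit_det _).2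
      (isUnit_iff_ne_zero.2 (Matrix.det_vandermonde_ne_zero_iff.2 ht))
  obtain ⟨c, hc⟩ := Matrix.vecMul_surjective_iff_isUnit.2 hV (fun i : Fin R => s i)
  have hlow : ∀ i < R, s i = ∑ k, c k * t k ^ i := fun i hi => (congrFun hc ⟨i, hi⟩).symm
  refine ⟨c, t, fun i => ?_⟩
  induction i using Nat.strong_induction_on with
  | _ i ih =>
    intro hi
    by_cases hiR : i < R
    · exact hlow i hiR
    obtain ⟨l, rfl⟩ : ∃ l, i = l + R := ⟨i - R, by omega⟩
    have hl : l < R := by omega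
    refine mul_left_cancel₀ hdet ?_
    rw [← sum_mul_recurrenceCoeff s R ⟨l, hl⟩, Finset.mul_sum]
    calc ∑ j : Fin R, s (l + j) * recurrenceCoeff s R j
        = ∑ j : Fin R, ∑ k, c k * t k ^ l * (recurrenceCoeff s R j * t k ^ (j : ℕ)) := by
          refine Finset.sum_congr rfl fun j _ => ?_
          rw [ih (l + j) (by omega) (by omega), Finset.sum_mul]
          refine Finset.sum_congr rfl fun k _ => ?_
          ring
      _ = ∑ k, (hankelMatrix s R).det * (c k * t k ^ (l + R)) := by
          rw [Finset.sum_comm]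
          refine Finset.sum_congr rfl fun k _ => ?_
          rw [← Finset.mul_sum, ← hroot]
          ring

lemma det_hankelMatrix_sum_pow_ne_zero {R : ℕ} {t : Fin R → ℂ} (ht : Function.Injective t) :
    (hankelMatrix (fun i => ∑ k, t k ^ i) R).det ≠ 0 := by
  have h : hankelMatrix (fun i => ∑ k, t k ^ i) R
      = (Matrix.vandermonde t).transpose * Matrix.vandermonde t := by
    ext i j
    rw [Matrix.vandermonde_transpose_mul_vandermonde]
    rfl
  rw [h, Matrix.det_mul, Matrix.det_transpose]
  exact mul_ne_zero (Matrix.det_vandermonde_ne_zero_iff.2 ht)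
    (Matrix.det_vandermonde_ne_zero_iff.2 ht)

lemma eval_recurrencePoly_sum_pow {R : ℕ} {t : Fin R → ℂ} (ht : Function.Injective t)
    (l : Fin R) : (recurrencePoly (fun i => ∑ k, t k ^ i) R).eval (t l) = 0 := by
  have h := Matrix.eq_zero_of_forall_pow_sum_mul_pow_eq_zero ht
    (v := fun k => (recurrencePoly (fun i => ∑ k, t k ^ i) R).eval (t k)) fun i => by
      have hi := sum_mul_recurrenceCoeff (fun i => ∑ k, t k ^ i) R i
      simp only [Finset.sum_mul, Finset.mul_sum] at hi
      rw [Finset.sum_comm] at hi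
      simp only [eval_recurrencePoly, sub_mul, Finset.sum_sub_distrib, Finset.sum_mul]
      rw [sub_eq_zero]
      refine Eq.trans (Finset.sum_congr rfl fun k _ => ?_) (hi.symm.trans
        (Finset.sum_congr rfl fun k _ => Finset.sum_congr rfl fun j _ => ?_))
      · ring
      · ring
  exact congrFun h l

lemma separable_recurrencePoly_sum_pow {R : ℕ} {t : Fin R → ℂ} (ht : Function.Injective t) :
    (recurrencePoly (fun i => ∑ k, t k ^ i) R).Separable := by
  classical
  have hdeg := degree_recurrencePoly (det_hankelMatrix_sum_pow_ne_zero ht)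
  set f := recurrencePoly (fun i => ∑ k, t k ^ i) R
  have hf0 : f ≠ 0 := by
    intro h
    simp [h] at hdeg
  rw [← Polynomial.nodup_roots_iff_of_splits hf0 (IsAlgClosed.splits _)]
  have hle : (Finset.univ.image t).val ≤ f.roots := by
    rw [Multiset.le_iff_subset (Finset.nodup _)]
    intro x hx
    obtain ⟨l, -, rfl⟩ := Finset.mem_image.1 (Finset.mem_def.2 hx)
    exact (Polynomial.mem_roots hf0).2 (eval_recurrencePoly_sum_pow ht l)
  rw [← Multiset.eq_of_le_of_card_le hle]
  · exact Finset.nodup _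
  · rw [Finset.card_val, Finset.card_image_of_injective _ ht, Finset.card_univ, Fintype.card_fin]
    exact (Polynomial.card_roots' f).trans
      (Polynomial.natDegree_eq_of_degree_eq_some hdeg).le

/-! ### The Koszul flattening of three matrices -/

/-- The matrix of the cross product with a vector. -/
def crossMatrix {A : Type*} [CommRing A] (a : Fin 3 → A) : Matrix (Fin 3) (Fin 3) A :=
  !![0, a 2, -a 1; -a 2, 0, a 0; a 1, -a 0, 0]

/-- The Koszul flattening of a triple of `n × n` matrices. -/
def koszulMatrix {A : Type*} [CommRing A] {n : ℕ} (τ : Fin 3 → Fin n → Fin n → A) :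
    Matrix (Fin 3 × Fin n) (Fin 3 × Fin n) A :=
  Matrix.of fun x y => crossMatrix (fun c => τ c x.2 y.2) x.1 y.1

lemma exists_crossMatrix_eq_mul (a : Fin 3 → ℂ) :
    ∃ (U : Matrix (Fin 3) (Fin 2) ℂ) (W : Matrix (Fin 2) (Fin 3) ℂ), crossMatrix a = U * W := by
  by_cases h0 : a 0 = 0
  · by_cases h1 : a 1 = 0
    · refine ⟨!![1, 0; 0, 1; 0, 0], !![0, a 2, 0; -a 2, 0, 0], ?_⟩
      ext i j
      fin_cases i <;> fin_cases j <;> simp [crossMatrix, Matrix.mul_apply, Fin.sum_univ_two, h0, h1]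
    · refine ⟨!![-a 1, 0; a 0, -a 2; 0, a 1], !![0, -a 2 / a 1, 1; 1, -a 0 / a 1, 0], ?_⟩
      ext i j
      fin_cases i <;> fin_cases j <;>
        simp [crossMatrix, Matrix.mul_apply, Fin.sum_univ_two] <;> field_simp <;> ring
  · refine ⟨!![a 1, a 2; -a 0, 0; 0, -a 0], !![a 2 / a 0, 0, -1; -a 1 / a 0, 1, 0], ?_⟩
    ext i j
    fin_cases i <;> fin_cases j <;>
      simp [crossMatrix, Matrix.mul_apply, Fin.sum_univ_two] <;> field_simp <;> ring

lemma crossMatrix_sum {A : Type*} [CommRing A] {r : ℕ} (a : Fin r → Fin 3 → A)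
    (w : Fin r → A) (x y : Fin 3) :
    crossMatrix (fun c => ∑ k, a k c * w k) x y = ∑ k, crossMatrix (a k) x y * w k := by
  fin_cases x <;> fin_cases y <;> simp [crossMatrix]

lemma koszulMatrix_eq_mul {A : Type*} [CommRing A] {n r : ℕ} (a : Fin r → Fin 3 → A)
    (v w : Fin r → Fin n → A) (U : Fin r → Matrix (Fin 3) (Fin 2) A)
    (W : Fin r → Matrix (Fin 2) (Fin 3) A) (h : ∀ k, crossMatrix (a k) = U k * W k) :
    koszulMatrix (fun c i j => ∑ k, a k c * (v k i * w k j))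
      = (Matrix.of fun (x : Fin 3 × Fin n) (k : Fin r × Fin 2) => U k.1 x.1 k.2 * v k.1 x.2)
        * (Matrix.of fun (k : Fin r × Fin 2) (y : Fin 3 × Fin n) =>
            W k.1 k.2 y.1 * w k.1 y.2) := by
  ext x y
  rw [koszulMatrix, Matrix.of_apply, crossMatrix_sum, Matrix.mul_apply, Fintype.sum_prod_type]
  refine Finset.sum_congr rfl fun k _ => ?_
  rw [h, Matrix.mul_apply, Finset.sum_mul]
  refine Finset.sum_congr rfl fun l _ => ?_
  simp only [Matrix.of_apply]
  ring

lemma det_mul_eq_zero_of_card_lt {ι κ : Type*} [Fintype ι] [Fintype κ] [DecidableEq ι]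
    (A : Matrix ι κ ℂ) (B : Matrix κ ι ℂ) (h : Fintype.card κ < Fintype.card ι) :
    (A * B).det = 0 := by
  by_contra hdet
  have h1 := Matrix.rank_of_isUnit (A * B)
    ((Matrix.isUnit_iff_isUnit_det _).2 (isUnit_iff_ne_zero.2 hdet))
  have h2 := (Matrix.rank_mul_le_left A B).trans A.rank_le_card_width
  omega

/-- The compressed Koszul flattening of three slices of an order-three tensor. -/
def koszulDet {n R : ℕ} (σ : Fin 3 → Fin n) (E : Matrix (Fin R × Fin 2) (Fin 3 × Fin n) ℂ)
    (T : Tensor 3 n) : ℂ :=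
  (E * koszulMatrix (fun c i j => T ![σ c, i, j]) * E.transpose).det

lemma koszulDet_eq_zero_of_mem_cpSet {n R r : ℕ} (hr : r < R) (σ : Fin 3 → Fin n)
    (E : Matrix (Fin R × Fin 2) (Fin 3 × Fin n) ℂ) {T : Tensor 3 n} (hT : T ∈ cpSet 3 n r) :
    koszulDet σ E T = 0 := by
  obtain ⟨u, hu⟩ := hT
  choose U W hUW using fun k => exists_crossMatrix_eq_mul fun c => u k 0 (σ c)
  have hT' : (fun c i j => T ![σ c, i, j])
      = fun c i j => ∑ k, u k 0 (σ c) * (u k 1 i * u k 2 j) := by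
    funext c i j
    simp [hu, Fin.prod_univ_three, mul_assoc]
  rw [koszulDet, hT', koszulMatrix_eq_mul (fun k c => u k 0 (σ c)) (fun k => u k 1)
    (fun k => u k 2) U W hUW, ← Matrix.mul_assoc, Matrix.mul_assoc]
  refine det_mul_eq_zero_of_card_lt _ _ ?_
  simp only [Fintype.card_prod, Fintype.card_fin]
  omega

lemma continuous_koszulDet {n R : ℕ} (σ : Fin 3 → Fin n)
    (E : Matrix (Fin R × Fin 2) (Fin 3 × Fin n) ℂ) : Continuous (koszulDet σ E) := by
  have h : Continuous fun T : Tensor 3 n => koszulMatrix (fun c i j => T ![σ c, i, j]) := by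
    refine continuous_matrix fun x y => ?_
    obtain ⟨x, i⟩ := x
    obtain ⟨y, j⟩ := y
    fin_cases x <;> fin_cases y <;> simp [koszulMatrix, crossMatrix] <;> fun_prop
  exact ((continuous_const.matrix_mul h).matrix_mul continuous_const).matrix_det

lemma koszulDet_eq_zero_of_mem_closure {n R r : ℕ} (hr : r < R) (σ : Fin 3 → Fin n)
    (E : Matrix (Fin R × Fin 2) (Fin 3 × Fin n) ℂ) {T : Tensor 3 n}
    (hT : T ∈ closure (cpSet 3 n r)) : koszulDet σ E T = 0 := by
  have hcl : IsClosed {T : Tensor 3 n | koszulDet σ E T = 0} :=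
    isClosed_eq (continuous_koszulDet σ E) continuous_const
  exact closure_minimal (fun S hS => koszulDet_eq_zero_of_mem_cpSet hr σ E hS) hcl hT

/-! ### A sum of powers with nonsingular compressed Koszul flattening -/

/-- A basis of the orthogonal complement of `(1, x, y)`. -/
def orthMatrix (x y : ℂ) : Matrix (Fin 3) (Fin 2) ℂ :=
  !![x, y; -1, 0; 0, -1]

lemma crossMatrix_eq_orthMatrix_mul (x y : ℂ) :
    crossMatrix ![1, x, y] = orthMatrix x y
      * ((!![0, 1; -1, 0] : Matrix (Fin 2) (Fin 2) ℂ) * (orthMatrix x y).transpose) := by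
  ext i j
  fin_cases i <;> fin_cases j <;>
    simp [crossMatrix, orthMatrix, Matrix.mul_apply, Matrix.vecMul, dotProduct, Fin.sum_univ_two,
      mul_comm]

/-- The columns span the column space of the Koszul flattening of a sum of powers. -/
def momentMatrix (n R p q : ℕ) (t : Fin R → ℂ) : Matrix (Fin 3 × Fin n) (Fin R × Fin 2) ℂ :=
  Matrix.of fun x k => orthMatrix (t k.1 ^ p) (t k.1 ^ q) x.1 k.2 * t k.1 ^ (x.2 : ℕ)

lemma momentMatrix_mulVec_injective {n R p : ℕ} {t : Fin R → ℂ} (ht : Function.Injective t)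
    (hp : R ≤ p + n) (hp' : R + p + 1 ≤ 2 * n) :
    Function.Injective (momentMatrix n R p (n - 1) t).mulVec := by
  rw [← Matrix.coe_mulVecLin, injective_iff_map_eq_zero]
  intro z hz
  rw [Matrix.mulVecLin_apply] at hz
  have hrow : ∀ (a : Fin 3) (j : Fin n), ∑ k, (orthMatrix (t k ^ p) (t k ^ (n - 1)) a 0
      * t k ^ (j : ℕ) * z (k, 0) + orthMatrix (t k ^ p) (t k ^ (n - 1)) a 1
      * t k ^ (j : ℕ) * z (k, 1)) = 0 := fun a j => by
    have h := congrFun hz (a, j)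
    simpa [Matrix.mulVec, dotProduct, Fintype.sum_prod_type, momentMatrix] using h
  have hc : ∀ j < n, ∑ k, z (k, 0) * t k ^ j = 0 := fun j hj => by
    have h := hrow 1 ⟨j, hj⟩
    simpa [orthMatrix, Finset.sum_neg_distrib, mul_comm] using h
  have hd : ∀ j < n, ∑ k, z (k, 1) * t k ^ j = 0 := fun j hj => by
    have h := hrow 2 ⟨j, hj⟩
    simpa [orthMatrix, Finset.sum_neg_distrib, mul_comm] using h
  have hcd : ∀ j < n, ∑ k, z (k, 0) * t k ^ (p + j)
      + ∑ k, z (k, 1) * t k ^ (n - 1 + j) = 0 := fun j hj => by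
    rw [← hrow 0 ⟨j, hj⟩, ← Finset.sum_add_distrib]
    refine Finset.sum_congr rfl fun k _ => ?_
    simp [orthMatrix, pow_add]
    ring
  have hd0 : (fun k => z (k, 1)) = 0 := by
    refine Matrix.eq_zero_of_forall_pow_sum_mul_pow_eq_zero ht fun i => ?_
    by_cases hi : (i : ℕ) < n
    · exact hd i hi
    have h := hcd (i - (n - 1)) (by omega)
    rw [hc _ (by omega), zero_add] at h
    convert h using 4
    omega
  have hd0' : ∀ k, z (k, 1) = 0 := fun k => congrFun hd0 k
  have hc0 : (fun k => z (k, 0)) = 0 := by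
    refine Matrix.eq_zero_of_forall_pow_sum_mul_pow_eq_zero ht fun i => ?_
    by_cases hi : (i : ℕ) < n
    · exact hc i hi
    have h := hcd (i - p) (by omega)
    simp only [hd0', zero_mul, Finset.sum_const_zero, add_zero] at h
    convert h using 4
    omega
  funext ⟨k, l⟩
  fin_cases l
  · exact congrFun hc0 k
  · exact hd0' k

lemma exists_left_inverse_of_mulVec_injective {ι κ : Type*} [Fintype ι] [Fintype κ]
    [DecidableEq ι] [DecidableEq κ] {M : Matrix ι κ ℂ} (hM : Function.Injective M.mulVec) :
    ∃ E : Matrix κ ι ℂ, E * M = 1 := by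
  obtain ⟨g, hg⟩ := LinearMap.exists_leftInverse_of_injective (Matrix.toLin' M)
    (LinearMap.ker_eq_bot.2 hM)
  refine ⟨LinearMap.toMatrix' g, ?_⟩
  rw [← LinearMap.toMatrix'_toLin' M, ← LinearMap.toMatrix'_comp, hg, LinearMap.toMatrix'_id]

lemma exists_det_koszulMatrix_sum_pow_ne_zero {n R p : ℕ} {t : Fin R → ℂ}
    (ht : Function.Injective t) (hp : R ≤ p + n) (hp' : R + p + 1 ≤ 2 * n) :
    ∃ E : Matrix (Fin R × Fin 2) (Fin 3 × Fin n) ℂ,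
      (E * koszulMatrix (fun (c : Fin 3) (i j : Fin n) =>
        ∑ k, t k ^ (![0, p, n - 1] c + (i : ℕ) + (j : ℕ))) * E.transpose).det ≠ 0 := by
  obtain ⟨E, hE⟩ := exists_left_inverse_of_mulVec_injective
    (momentMatrix_mulVec_injective ht hp hp')
  set M := momentMatrix n R p (n - 1) t with hM
  have hτ : (fun (c : Fin 3) (i j : Fin n) =>
      ∑ k, t k ^ (![0, p, n - 1] c + (i : ℕ) + (j : ℕ)))
      = fun (c : Fin 3) (i j : Fin n) =>
        ∑ k, ![1, t k ^ p, t k ^ (n - 1)] c * (t k ^ (i : ℕ) * t k ^ (j : ℕ)) := by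
    funext c i j
    refine Finset.sum_congr rfl fun k _ => ?_
    fin_cases c <;> simp [pow_add, mul_assoc]
  have hK := koszulMatrix_eq_mul (fun k => ![1, t k ^ p, t k ^ (n - 1)])
    (fun k (i : Fin n) => t k ^ (i : ℕ)) (fun k (i : Fin n) => t k ^ (i : ℕ)) _ _
    (fun k => crossMatrix_eq_orthMatrix_mul (t k ^ p) (t k ^ (n - 1)))
  set J : Matrix (Fin R × Fin 2) (Fin R × Fin 2) ℂ :=
    Matrix.kronecker 1 !![0, 1; -1, 0] with hJ
  have hW : (Matrix.of fun (k : Fin R × Fin 2) (y : Fin 3 × Fin n) =>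
      ((!![0, 1; -1, 0] : Matrix (Fin 2) (Fin 2) ℂ)
        * (orthMatrix (t k.1 ^ p) (t k.1 ^ (n - 1))).transpose) k.2 y.1
        * t k.1 ^ (y.2 : ℕ)) = J * M.transpose := by
    ext ⟨k, l⟩ y
    rw [Matrix.mul_apply, Fintype.sum_prod_type, Finset.sum_eq_single k]
    · simp only [Matrix.of_apply, Matrix.mul_apply, Finset.sum_mul]
      refine Finset.sum_congr rfl fun m _ => ?_
      simp [hJ, hM, momentMatrix, mul_assoc]
    · intro k' _ hk'
      refine Finset.sum_eq_zero fun m _ => ?_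
      simp [hJ, Matrix.one_apply_ne hk'.symm]
    · simp
  refine ⟨E, ?_⟩
  rw [hτ, hK, hW]
  change (E * (M * (J * M.transpose)) * E.transpose).det ≠ 0
  have hEJ : E * (M * (J * M.transpose)) * E.transpose = J := by
    calc E * (M * (J * M.transpose)) * E.transpose
        = (E * M) * J * (E * M).transpose := by
          rw [Matrix.transpose_mul]
          simp only [Matrix.mul_assoc]
      _ = J := by rw [hE, Matrix.transpose_one, Matrix.one_mul, Matrix.mul_one]
  have hdet : J.det = _ := Matrix.det_kronecker 1 !![0, 1; -1, 0]
  rw [hEJ, hdet]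
  simp [Matrix.det_fin_two]

/-! ### Comparison of the ranks -/

lemma vandSet_subset_symSet (m n r : ℕ) : vandSet m n r ⊆ symSet m n r :=
  fun _ ⟨ab, h⟩ => ⟨fun k => vand n (ab k).1 (ab k).2, h⟩

lemma symSet_subset_cpSet (m n r : ℕ) : symSet m n r ⊆ cpSet m n r :=
  fun _ ⟨v, h⟩ => ⟨fun k _ => v k, h⟩

lemma ranks_eq_of_mem_vandSet {m n R : ℕ} {T : Tensor m n} (hT : T ∈ vandSet m n R)
    (hlow : ∀ r < R, T ∉ closure (cpSet m n r)) :
    brank T = R ∧ bSymRank T = R ∧ cpRank T = R ∧ symRank T = R ∧ vandRank T = R := by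
  have key : ∀ S : ℕ → Set (Tensor m n), T ∈ S R → (∀ r, S r ⊆ closure (cpSet m n r)) →
      sInf {r | T ∈ S r} = R := fun S hR hS =>
    le_antisymm (Nat.sInf_le hR) (le_csInf ⟨R, hR⟩ fun r hr => by
      by_contra hlt
      exact hlow r (not_le.1 hlt) (hS r hr))
  have hsym := vandSet_subset_symSet m n R hT
  have hcp := symSet_subset_cpSet m n R hsym
  refine ⟨key _ (subset_closure hcp) fun r => subset_rfl,
    key _ (subset_closure hsym) fun r => closure_mono (symSet_subset_cpSet m n r),
    key _ hcp fun r => subset_closure,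
    key _ hsym fun r => (symSet_subset_cpSet m n r).trans subset_closure,
    key _ hT fun r => ((vandSet_subset_symSet m n r).trans (symSet_subset_cpSet m n r)).trans
      subset_closure⟩

lemma mem_vandSet_of_sum_mul_pow {m n R : ℕ} (hd : (n - 1) * m ≠ 0) {T : Tensor m n}
    {c t : Fin R → ℂ} (hT : ∀ i, T i = ∑ k, c k * t k ^ ∑ j, (i j : ℕ)) :
    T ∈ vandSet m n R := by
  choose a ha using fun k => IsAlgClosed.exists_pow_nat_eq (c k) (Nat.pos_of_ne_zero hd)
  refine ⟨fun k => (a k, a k * t k), fun i => ?_⟩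
  rw [hT]
  refine Finset.sum_congr rfl fun k _ => ?_
  have hv : ∀ j, vand n (a k) (a k * t k) (i j) = a k ^ (n - 1) * t k ^ (i j : ℕ) := fun j => by
    have hj : n - 1 - (i j : ℕ) + (i j : ℕ) = n - 1 := by
      have := (i j).isLt
      omega
    rw [vand, mul_pow, ← mul_assoc, ← pow_add, hj]
  simp only [hv]
  rw [Finset.prod_mul_distrib, Finset.prod_const, Finset.prod_pow_eq_pow_sum, Finset.card_univ,
    Fintype.card_fin, ← pow_mul, ha]

/-- Extension of a finite sequence by prescribed values. -/
def extendSeq {A : Type*} {N : ℕ} (h : Fin N → A) (c : ℕ → A) (i : ℕ) : A :=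
  if hi : i < N then h ⟨i, hi⟩ else c i

lemma eval_extendSeq {N : ℕ} (h : Fin N → ℂ) (c : ℕ → ℂ) (i : ℕ) :
    MvPolynomial.eval h (extendSeq MvPolynomial.X (fun i => MvPolynomial.C (c i)) i)
      = extendSeq h c i := by
  unfold extendSeq
  split_ifs <;> simp

lemma IsHankel.eq_extendSeq {m n : ℕ} {T : Tensor m n} {h : Fin ((n - 1) * m + 1) → ℂ}
    (hT : IsHankel T h) (c : ℕ → ℂ) (i : Fin m → Fin n) :
    T i = extendSeq h c (∑ j, (i j : ℕ)) := by
  rw [hT i, extendSeq, dif_pos]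

/-- The product of the compressed Koszul flattening, the Hankel determinant and the recurrence
discriminant of a sequence. -/
def genericityForm {A : Type*} [CommRing A] {n R : ℕ} (p : ℕ)
    (E : Matrix (Fin R × Fin 2) (Fin 3 × Fin n) A) (s : ℕ → A) : A :=
  (E * koszulMatrix (fun (a : Fin 3) (i j : Fin n) => s (![0, p, n - 1] a + (i : ℕ) + (j : ℕ)))
    * E.transpose).det * ((hankelMatrix s R).det * recurrenceDiscr s R)

lemma map_genericityForm {A B : Type*} [CommRing A] [CommRing B] (φ : A →+* B) {n R : ℕ} (p : ℕ)
    (E : Matrix (Fin R × Fin 2) (Fin 3 × Fin n) A) (s : ℕ → A) :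
    φ (genericityForm p E s) = genericityForm p (E.map φ) (fun i => φ (s i)) := by
  have hK : ∀ τ : Fin 3 → Fin n → Fin n → A,
      (koszulMatrix τ).map φ = koszulMatrix (fun c i j => φ (τ c i j)) := fun τ => by
    ext ⟨x, i⟩ ⟨y, j⟩
    fin_cases x <;> fin_cases y <;> simp [koszulMatrix, crossMatrix]
  rw [genericityForm, genericityForm, map_mul, map_mul, map_det_hankelMatrix,
    map_recurrenceDiscr, φ.map_det, RingHom.mapMatrix_apply, Matrix.map_mul, Matrix.map_mul, hK,
    Matrix.transpose_map]

lemma exists_eval_eq_genericityForm {N n R : ℕ} (p : ℕ)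
    (E : Matrix (Fin R × Fin 2) (Fin 3 × Fin n) ℂ) (c : ℕ → ℂ) :
    ∃ P : MvPolynomial (Fin N) ℂ,
      ∀ h, MvPolynomial.eval h P = genericityForm p E (extendSeq h c) := by
  refine ⟨genericityForm p (E.map (MvPolynomial.C : ℂ →+* MvPolynomial (Fin N) ℂ))
    (extendSeq MvPolynomial.X fun i => MvPolynomial.C (c i)), fun h => ?_⟩
  have hE : (E.map (MvPolynomial.C : ℂ →+* MvPolynomial (Fin N) ℂ)).map (MvPolynomial.eval h)
      = E := by
    ext x y
    simp
  simp only [map_genericityForm, hE, eval_extendSeq]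

/-- For a generic Hankel tensor of order 3 and dimension `n`, all
ranks equal `⌊(3n-1)/2⌋`. -/
theorem stmt_16 (n : ℕ) (hn : 2 ≤ n) :
    ∃ P : MvPolynomial (Fin ((n - 1) * 3 + 1)) ℂ, P ≠ 0 ∧
      ∀ (H : Tensor 3 n) (h : Fin ((n - 1) * 3 + 1) → ℂ), IsHankel H h →
        MvPolynomial.eval h P ≠ 0 →
        brank H = (3 * n - 1) / 2 ∧ bSymRank H = (3 * n - 1) / 2 ∧
        cpRank H = (3 * n - 1) / 2 ∧ symRank H = (3 * n - 1) / 2 ∧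
        vandRank H = (3 * n - 1) / 2 := by
  obtain ⟨R, hR⟩ : ∃ R, R = (3 * n - 1) / 2 := ⟨_, rfl⟩
  obtain ⟨p, hp⟩ : ∃ p, p = (n - 1) / 2 := ⟨_, rfl⟩
  rw [← hR]
  obtain ⟨t, ht⟩ : ∃ t : Fin R → ℂ, Function.Injective t :=
    ⟨fun k => ((k : ℕ) : ℂ), Nat.cast_injective.comp Fin.val_injective⟩
  obtain ⟨c, hc⟩ : ∃ c : ℕ → ℂ, c = fun i => ∑ k, t k ^ i := ⟨_, rfl⟩
  obtain ⟨E, hE⟩ := exists_det_koszulMatrix_sum_pow_ne_zero (n := n) (p := p) ht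
    (by omega) (by omega)
  have hE' : genericityForm p E c ≠ 0 := by
    have hdet := det_hankelMatrix_sum_pow_ne_zero ht
    rw [hc]
    exact mul_ne_zero hE (mul_ne_zero hdet ((recurrenceDiscr_ne_zero_iff (by omega) hdet).2
      (separable_recurrencePoly_sum_pow ht)))
  obtain ⟨P, hP⟩ := exists_eval_eq_genericityForm (N := (n - 1) * 3 + 1) p E c
  refine ⟨P, fun hP0 => hE' ?_, fun H h hH hPh => ?_⟩
  · have hext : extendSeq (fun i : Fin ((n - 1) * 3 + 1) => c i) c = c := by
      funext i
      simp [extendSeq]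
    rw [← hext, ← hP, hP0, map_zero]
  · rw [hP, genericityForm] at hPh
    have hK := left_ne_zero_of_mul hPh
    have hdet := left_ne_zero_of_mul (right_ne_zero_of_mul hPh)
    have hdisc := right_ne_zero_of_mul (right_ne_zero_of_mul hPh)
    obtain ⟨b, x, hbx⟩ := exists_sum_mul_pow_of_separable hdet
      ((recurrenceDiscr_ne_zero_iff (by omega) hdet).1 hdisc)
    refine ranks_eq_of_mem_vandSet
      (mem_vandSet_of_sum_mul_pow (c := b) (t := x) (by omega) fun i => ?_) fun r hr hmem => ?_
    · rw [hH.eq_extendSeq c, hbx]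
      rw [Fin.sum_univ_three]
      have h0 := (i 0).isLt
      have h1 := (i 1).isLt
      have h2 := (i 2).isLt
      omega
    · set σ : Fin 3 → Fin n := ![⟨0, by omega⟩, ⟨p, by omega⟩, ⟨n - 1, by omega⟩] with hσ
      have hσval : ∀ a, (σ a : ℕ) = ![0, p, n - 1] a := fun a => by
        fin_cases a <;> simp [hσ]
      refine hK ?_
      rw [← koszulDet_eq_zero_of_mem_closure hr σ E hmem, koszulDet]
      simp only [hH.eq_extendSeq c, Fin.sum_univ_three, ← hσval]
      rfl
end
end

section
/- Let n ≥ 2, m ≥ 1, and let H be a Hankel tensor of order m and dimension n with parameter vector h ∈ ℂ^{d+1}, d = (n−1)m, and let s = ⌊d/2⌋. Then the border Vandermonde rank of H equals the rank of the most square catalecticant Hankel matrix of h: brank_V(H) = rank C_{d−s,s}(h). -/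
open scoped BigOperators
open MvPolynomial

noncomputable section

namespace HankelBorder

open Filter Topology

lemma natDegree_le_of_mem_degreeLT {q : ℕ} {f : Polynomial ℂ}
    (hf : f ∈ Polynomial.degreeLT ℂ (q + 1)) : f.natDegree ≤ q := by
  rw [Polynomial.degreeLT_succ_eq_degreeLE, Polynomial.mem_degreeLE] at hf
  exact Polynomial.natDegree_le_of_degree_le hf

/-- The linear functional on polynomials with moments `a`. -/
def moment (a : ℕ → ℂ) : Polynomial ℂ →ₗ[ℂ] ℂ :=
  (Polynomial.basisMonomials ℂ).constr ℂ a

lemma moment_X_pow (a : ℕ → ℂ) (k : ℕ) : moment a (Polynomial.X ^ k) = a k := by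
  have := (Polynomial.basisMonomials ℂ).constr_basis ℂ a k
  simpa only [Polynomial.coe_basisMonomials, Polynomial.monomial_one_right_eq_X_pow, moment]
    using this

lemma moment_monomial (a : ℕ → ℂ) (k : ℕ) (c : ℂ) :
    moment a (Polynomial.monomial k c) = c * a k := by
  rw [← Polynomial.smul_X_eq_monomial, map_smul, moment_X_pow, smul_eq_mul]

/-- The infinite Hankel array of `a` truncated to size `(p+1) × (q+1)`. -/
def hank (a : ℕ → ℂ) (p q : ℕ) : Matrix (Fin (p + 1)) (Fin (q + 1)) ℂ :=
  Matrix.of fun i j => a (i + j)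

lemma rank_hank_comm (a : ℕ → ℂ) (p q : ℕ) : (hank a p q).rank = (hank a q p).rank := by
  rw [← Matrix.rank_transpose]
  congr 1
  ext i j
  simp [hank, add_comm]

/-- Polynomials of degree at most `q` that annihilate `a` up to total degree `p + q`. -/
def annih (a : ℕ → ℂ) (p q : ℕ) : Submodule ℂ (Polynomial ℂ) where
  carrier := {f | f ∈ Polynomial.degreeLT ℂ (q + 1) ∧
    ∀ i ≤ p, moment a (Polynomial.X ^ i * f) = 0}
  add_mem' := fun hf hg => ⟨add_mem hf.1 hg.1, fun i hi => by
    rw [mul_add, map_add, hf.2 i hi, hg.2 i hi, add_zero]⟩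
  zero_mem' := ⟨zero_mem _, by simp⟩
  smul_mem' := fun c f hf => ⟨Submodule.smul_mem _ c hf.1, fun i hi => by
    rw [mul_smul_comm, map_smul, hf.2 i hi, smul_zero]⟩

lemma annih_le_degreeLT (a : ℕ → ℂ) (p q : ℕ) :
    annih a p q ≤ Polynomial.degreeLT ℂ (q + 1) := fun _ h => h.1

instance (q : ℕ) : FiniteDimensional ℂ (Polynomial.degreeLT ℂ q) :=
  (Polynomial.degreeLTEquiv ℂ q).symm.finiteDimensional

instance (a : ℕ → ℂ) (p q : ℕ) : FiniteDimensional ℂ (annih a p q) :=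
  Submodule.finiteDimensional_of_le (annih_le_degreeLT a p q)

/-- The polynomial with given coefficient vector. -/
def ofCoeffs (q : ℕ) : (Fin q → ℂ) →ₗ[ℂ] Polynomial ℂ :=
  (Polynomial.degreeLT ℂ q).subtype ∘ₗ (Polynomial.degreeLTEquiv ℂ q).symm.toLinearMap

lemma ofCoeffs_apply (q : ℕ) (v : Fin q → ℂ) :
    ofCoeffs q v = ∑ j : Fin q, Polynomial.monomial (j : ℕ) (v j) := rfl

lemma ofCoeffs_injective (q : ℕ) : Function.Injective (ofCoeffs q) :=
  (Submodule.injective_subtype _).comp (Polynomial.degreeLTEquiv ℂ q).symm.injective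

lemma annih_eq_map (a : ℕ → ℂ) (p q : ℕ) :
    annih a p q = (LinearMap.ker (hank a p q).mulVecLin).map (ofCoeffs (q + 1)) := by
  have key : ∀ v : Fin (q + 1) → ℂ, ∀ i : Fin (p + 1),
      moment a (Polynomial.X ^ (i : ℕ) * ofCoeffs (q + 1) v) = (hank a p q).mulVec v i := by
    intro v i
    rw [ofCoeffs_apply, Finset.mul_sum, map_sum]
    refine Finset.sum_congr rfl fun j _ => ?_
    rw [Polynomial.X_pow_mul_monomial, moment_monomial, mul_comm, add_comm (j : ℕ)]
    rfl
  ext f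
  constructor
  · rintro ⟨hf, h0⟩
    refine ⟨Polynomial.degreeLTEquiv ℂ (q + 1) ⟨f, hf⟩, ?_, ?_⟩
    · rw [SetLike.mem_coe, LinearMap.mem_ker, Matrix.mulVecLin_apply]
      ext i
      rw [← key, ofCoeffs]
      simpa using h0 i (Nat.lt_succ_iff.mp i.2)
    · simp [ofCoeffs]
  · rintro ⟨v, hv, rfl⟩
    refine ⟨Subtype.prop _, fun i hi => ?_⟩
    have := key v ⟨i, Nat.lt_succ_of_le hi⟩
    rw [SetLike.mem_coe, LinearMap.mem_ker, Matrix.mulVecLin_apply] at hv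
    simpa [hv] using this

lemma rank_add_finrank_annih (a : ℕ → ℂ) (p q : ℕ) :
    (hank a p q).rank + Module.finrank ℂ (annih a p q) = q + 1 := by
  rw [annih_eq_map,
    ← (Submodule.equivMapOfInjective _ (ofCoeffs_injective (q + 1)) _).finrank_eq, Matrix.rank,
    LinearMap.finrank_range_add_finrank_ker]
  simp

lemma finrank_annih_succ (a : ℕ → ℂ) (p q : ℕ) (h : annih a (p + 1) q ≠ ⊥) :
    Module.finrank ℂ (annih a (p + 1) q) + 1 ≤ Module.finrank ℂ (annih a p (q + 1)) := by
  have hle : annih a (p + 1) q ≤ annih a p (q + 1) := fun f hf =>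
    ⟨Polynomial.degreeLT_mono (Nat.le_succ _) hf.1, fun i hi => hf.2 i (by omega)⟩
  refine Submodule.finrank_lt_finrank_of_lt (lt_of_le_of_ne hle fun heq => h ?_)
  have hX : ∀ k : ℕ, ∀ f ∈ annih a (p + 1) q, Polynomial.X ^ k * f ∈ annih a (p + 1) q := by
    intro k
    induction k with
    | zero => simp
    | succ k ih =>
      intro f hf
      have hk := ih f hf
      rw [heq]
      refine ⟨?_, fun i hi => ?_⟩
      · rw [pow_succ', mul_assoc, Polynomial.mem_degreeLT, Polynomial.degree_mul,
          Polynomial.degree_X, add_comm, Nat.cast_add]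
        have := Polynomial.mem_degreeLT.mp hk.1
        exact WithBot.add_lt_add_right (by simp) this
      · rw [pow_succ', mul_assoc, ← mul_assoc, ← pow_succ]
        exact hk.2 _ (by omega)
  rw [Submodule.eq_bot_iff]
  intro f hf
  by_contra hf0
  have := Polynomial.mem_degreeLT.mp (hX (q + 1) f hf).1
  rw [Polynomial.degree_mul, Polynomial.degree_X_pow,
    Polynomial.degree_eq_natDegree hf0, ← Nat.cast_add, Nat.cast_lt] at this
  omega

lemma finrank_annih_add (a : ℕ → ℂ) (p q j : ℕ) (h : annih a (p + j) q ≠ ⊥) :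
    Module.finrank ℂ (annih a (p + j) q) + j ≤ Module.finrank ℂ (annih a p (q + j)) := by
  induction j generalizing p with
  | zero => simp
  | succ j ih =>
    have h1 := ih (p + 1) (by rwa [add_right_comm] )
    have hne : annih a (p + 1) (q + j) ≠ ⊥ := by
      intro h0
      rw [h0, finrank_bot] at h1
      refine h (Submodule.finrank_eq_zero.mp ?_)
      rw [← add_assoc, add_right_comm]
      omega
    have h2 := finrank_annih_succ a p (q + j) hne
    rw [show p + (j + 1) = p + 1 + j by omega, ← add_assoc q]
    omega

/-- A Hankel matrix of rank `r` which is at least as tall as wide has an annihilating binary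
form of degree `r`. -/
lemma annih_rank_ne_bot (a : ℕ → ℂ) (p q : ℕ) (hqp : q ≤ p) (hpq : p ≤ q + 1) (hp : 1 ≤ p) :
    annih a (p + q - (hank a p q).rank) (hank a p q).rank ≠ ⊥ := by
  have hrk := rank_add_finrank_annih a p q
  generalize hr : (hank a p q).rank = r at hrk ⊢
  rcases Nat.lt_or_ge q r with hlt | hle
  · obtain rfl : r = q + 1 := by omega
    intro h0
    have h1 := rank_add_finrank_annih a (p + q - (q + 1)) (q + 1)
    have h2 := (hank a (p + q - (q + 1)) (q + 1)).rank_le_height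
    rw [h0, finrank_bot] at h1
    omega
  · obtain ⟨t, rfl⟩ := Nat.exists_eq_add_of_le hle
    intro h0
    have h1 := rank_add_finrank_annih a (p + (r + t) - r) r
    rw [h0, finrank_bot, rank_hank_comm] at h1
    have h2 := rank_add_finrank_annih a r (p + (r + t) - r)
    obtain ⟨j, rfl⟩ := Nat.exists_eq_add_of_le (show r ≤ p by omega)
    have hne : annih a (r + j) (r + t) ≠ ⊥ := fun h => by
      rw [h, finrank_bot] at hrk
      omega
    have h3 := finrank_annih_add a r (r + t) j hne
    rw [show r + j + (r + t) - r = r + t + j by omega] at h1 h2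
    omega

/-- A functional vanishing on the multiples of a polynomial with distinct roots is a combination
of evaluations at the roots. -/
lemma exists_eq_sum_pow {a : ℕ → ℂ} {d r : ℕ} {z : Fin r → ℂ} (hz : Function.Injective z)
    (h : ∀ i ≤ d - r, moment a (Polynomial.X ^ i * Lagrange.nodal Finset.univ z) = 0) :
    ∃ c : Fin r → ℂ, ∀ k ≤ d, a k = ∑ i, c i * z i ^ k := by
  refine ⟨fun i => moment a (Lagrange.basis Finset.univ z i), fun k hk => ?_⟩
  set g := Lagrange.nodal Finset.univ z with hg
  have hmonic : g.Monic := Lagrange.nodal_monic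
  have hsplit := Polynomial.modByMonic_add_div (Polynomial.X ^ k : Polynomial ℂ) g
  have hquot : moment a (g * (Polynomial.X ^ k /ₘ g)) = 0 := by
    rw [Polynomial.as_sum_range (Polynomial.X ^ k /ₘ g), Finset.mul_sum, map_sum]
    refine Finset.sum_eq_zero fun i hi => ?_
    rw [Finset.mem_range, Polynomial.natDegree_divByMonic _ hmonic, Polynomial.natDegree_X_pow, hg,
      Lagrange.natDegree_nodal, Finset.card_univ, Fintype.card_fin] at hi
    rw [← Polynomial.smul_X_eq_monomial, mul_smul_comm, map_smul, mul_comm, h i (by omega),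
      smul_zero]
  have hdeg : (Polynomial.X ^ k %ₘ g).degree < (Finset.univ : Finset (Fin r)).card := by
    rw [← Lagrange.degree_nodal (v := z)]
    exact Polynomial.degree_modByMonic_lt _ hmonic
  have heval : ∀ i, (Polynomial.X ^ k %ₘ g).eval (z i) = z i ^ k := by
    intro i
    have h1 := congrArg (Polynomial.eval (z i)) hsplit
    rw [Polynomial.eval_add, Polynomial.eval_mul, hg,
      Lagrange.eval_nodal_at_node (Finset.mem_univ i), zero_mul, add_zero] at h1
    simpa using h1
  rw [← moment_X_pow a k, ← hsplit, map_add, hquot, add_zero,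
    Lagrange.eq_interpolate hz.injOn hdeg, Lagrange.interpolate_apply, map_sum]
  refine Finset.sum_congr rfl fun i _ => ?_
  rw [heval, Polynomial.C_mul', map_smul, smul_eq_mul, mul_comm]

lemma continuous_coeff_prod {ι : Type*} (s : Finset ι) (P : ι → ℂ → Polynomial ℂ)
    (hP : ∀ i ∈ s, ∀ k, Continuous fun t => (P i t).coeff k) (k : ℕ) :
    Continuous fun t => (∏ i ∈ s, P i t).coeff k := by
  classical
  induction s using Finset.induction_on generalizing k with
  | empty => simpa using continuous_const
  | insert i s hi ih =>
    simp only [Finset.prod_insert hi, Polynomial.coeff_mul]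
    exact continuous_finsetSum _ fun x _ => (hP i (Finset.mem_insert_self _ _) _).mul
      (ih (fun j hj => hP j (Finset.mem_insert_of_mem hj)) _)

lemma exists_roots_range {g : Polynomial ℂ} :
    ∃ w : ℕ → ℂ, g = Polynomial.C g.leadingCoeff *
      ∏ i ∈ Finset.range g.natDegree, (Polynomial.X - Polynomial.C (w i)) := by
  have hs := IsAlgClosed.splits g
  refine ⟨fun i => g.roots.toList.getD i 0, ?_⟩
  conv_lhs => rw [hs.eq_prod_roots]
  congr 1
  rw [hs.natDegree_eq_card_roots, ← Multiset.length_toList, Finset.prod_range]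
  conv_lhs => rw [← Multiset.coe_toList g.roots]
  rw [Multiset.map_coe, Multiset.prod_coe, ← Fin.prod_univ_fun_getElem]
  exact Finset.prod_congr rfl fun i _ => by simp [List.getElem?_eq_getElem i.2]

/-- A nonzero polynomial of degree at most `r` is a limit of polynomials with `r` distinct roots,
along a path with continuous coefficients. -/
lemma exists_path_distinct_roots {g : Polynomial ℂ} (hg : g ≠ 0) {r : ℕ} (hr : g.natDegree ≤ r) :
    ∃ G : ℂ → Polynomial ℂ, (∀ k, Continuous fun t => (G t).coeff k) ∧ G 0 = g ∧
      ∀ᶠ t in 𝓝[≠] (0 : ℂ), ∃ c : ℂ, c ≠ 0 ∧ ∃ z : Fin r → ℂ, Function.Injective z ∧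
        G t = Polynomial.C c * Lagrange.nodal Finset.univ z := by
  obtain ⟨w, hw⟩ := exists_roots_range (g := g)
  set e := g.natDegree with he
  set u : ℕ → ℂ → ℂ := fun i t => if i < e then 1 else t * (i + 1) with hu
  set v : ℕ → ℂ → ℂ := fun i t => if i < e then w i + t * i else -1 with hv
  have hucont : ∀ i, Continuous (u i) := fun i => by
    simp only [hu]; split_ifs <;> fun_prop
  have hvcont : ∀ i, Continuous (v i) := fun i => by
    simp only [hv]; split_ifs <;> fun_prop
  have hne : ∀ᶠ t in 𝓝[≠] (0 : ℂ), t ≠ 0 := eventually_mem_nhdsWithin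
  have hu0 : ∀ i t, t ≠ 0 → u i t ≠ 0 := by
    intro i t ht
    simp only [hu]
    split_ifs
    · exact one_ne_zero
    · exact mul_ne_zero ht (Nat.cast_add_one_ne_zero i)
  have hcross : ∀ i j : ℕ, i < j → ∀ᶠ t in 𝓝[≠] (0 : ℂ), v i t * u j t ≠ v j t * u i t := by
    intro i j hij
    have hgen : v i 0 * u j 0 ≠ v j 0 * u i 0 →
        ∀ᶠ t in 𝓝[≠] (0 : ℂ), v i t * u j t ≠ v j t * u i t := fun h =>
      eventually_nhdsWithin_of_eventually_nhds
        ((isOpen_ne_fun ((hvcont i).mul (hucont j)) ((hvcont j).mul (hucont i))).mem_nhds h)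
    by_cases hi : i < e <;> by_cases hj : j < e
    · by_cases hwij : w i = w j
      · filter_upwards [hne] with t ht
        simp only [hu, hv, if_pos hi, if_pos hj, hwij, mul_one]
        intro h
        have := mul_left_cancel₀ ht (add_left_cancel h)
        exact hij.ne (Nat.cast_injective this)
      · exact hgen (by simpa [hu, hv, hi, hj] using hwij)
    · exact hgen (by simp [hu, hv, hi, hj])
    · omega
    · filter_upwards [hne] with t ht
      simp only [hu, hv, if_neg hi, if_neg hj]
      intro h
      have := mul_left_cancel₀ ht (mul_left_cancel₀ (by norm_num) h)
      exact hij.ne' (Nat.succ_injective (by exact_mod_cast this))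
  refine ⟨fun t => Polynomial.C g.leadingCoeff * ∏ i ∈ Finset.range r,
    (Polynomial.C (u i t) * Polynomial.X - Polynomial.C (v i t)), fun k => ?_, ?_, ?_⟩
  · simp only [Polynomial.coeff_C_mul]
    refine continuous_const.mul (continuous_coeff_prod _ _ (fun i _ k => ?_) k)
    simp only [Polynomial.coeff_sub, Polynomial.coeff_C_mul, Polynomial.coeff_C]
    have := hvcont i
    have := hucont i
    split_ifs <;> fun_prop
  · conv_rhs => rw [hw]
    simp only
    congr 1
    obtain ⟨t, rfl⟩ := Nat.exists_eq_add_of_le hr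
    rw [Finset.prod_range_add, ← mul_one (∏ i ∈ Finset.range e, (Polynomial.X - _))]
    congr 1
    · exact Finset.prod_congr rfl fun i hi => by simp [hu, hv, Finset.mem_range.mp hi]
    · exact Finset.prod_eq_one fun i _ => by simp [hu, hv]
  · have hall : ∀ᶠ t in 𝓝[≠] (0 : ℂ), ∀ i j : Fin r, i < j →
        v i t * u j t ≠ v j t * u i t := by
      simp only [eventually_all]
      exact fun i j hij => hcross i j hij
    filter_upwards [hall, hne] with t ht ht0
    refine ⟨g.leadingCoeff * ∏ i : Fin r, u i t, mul_ne_zero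
      (Polynomial.leadingCoeff_ne_zero.mpr hg) (Finset.prod_ne_zero_iff.mpr fun i _ => hu0 i t ht0),
      fun i => v i t / u i t, ?_, ?_⟩
    · intro i j hij
      simp only at hij
      rw [div_eq_div_iff (hu0 i t ht0) (hu0 j t ht0)] at hij
      rcases lt_trichotomy i j with h | h | h
      · exact absurd hij (ht i j h)
      · exact h
      · exact absurd hij.symm (ht j i h)
    · rw [Lagrange.nodal_eq, Polynomial.C_mul, mul_assoc, map_prod, ← Finset.prod_mul_distrib,
        Finset.prod_range]
      congr 1
      refine Finset.prod_congr rfl fun i _ => ?_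
      rw [mul_sub, ← Polynomial.C_mul, mul_div_cancel₀ _ (hu0 i t ht0)]

/-- Extension of a finite vector by zero. -/
def extend {d : ℕ} (h : Fin (d + 1) → ℂ) (k : ℕ) : ℂ :=
  if hk : k < d + 1 then h ⟨k, hk⟩ else 0

lemma moment_extend {d : ℕ} (h : Fin (d + 1) → ℂ) (p : Polynomial ℂ) :
    moment (extend h) p = ∑ k : Fin (d + 1), p.coeff k * h k := by
  induction p using Polynomial.induction_on' with
  | add p q hp hq => simp [hp, hq, add_mul, Finset.sum_add_distrib]
  | monomial k c =>
    rw [moment_monomial, extend]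
    simp only [Polynomial.coeff_monomial]
    split_ifs with hk
    · rw [Finset.sum_eq_single ⟨k, hk⟩] <;> simp [Fin.ext_iff]
      omega
    · rw [Finset.sum_eq_zero, mul_zero]
      intro i _
      rw [if_neg (by omega), zero_mul]

/-- The matrix with rows the coefficient vectors of `g, X g, …, X ^ (d - r) g`. -/
def shiftMat (d r : ℕ) (g : Polynomial ℂ) : Matrix (Fin (d - r + 1)) (Fin (d + 1)) ℂ :=
  Matrix.of fun i k => (Polynomial.X ^ (i : ℕ) * g).coeff k

lemma shiftMat_mulVec (d r : ℕ) (g : Polynomial ℂ) (h : Fin (d + 1) → ℂ) (i : Fin (d - r + 1)) :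
    (shiftMat d r g).mulVec h i = moment (extend h) (Polynomial.X ^ (i : ℕ) * g) := by
  rw [moment_extend]
  rfl

lemma exists_shiftMat_mul_eq_one {d r : ℕ} (hrd : r ≤ d) {g : Polynomial ℂ} (hg : g ≠ 0)
    (hr : g.natDegree ≤ r) :
    ∃ R : Matrix (Fin (d + 1)) (Fin (d - r + 1)) ℂ, shiftMat d r g * R = 1 := by
  rw [← Matrix.mulVec_surjective_iff_exists_right_inverse]
  have hinj : Function.Injective (shiftMat d r g).transpose.mulVecLin := by
    rw [injective_iff_map_eq_zero]
    intro f hf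
    have hprod : ofCoeffs (d - r + 1) f * g = 0 := by
      have hfd : (ofCoeffs (d - r + 1) f).natDegree ≤ d - r :=
        natDegree_le_of_mem_degreeLT (Subtype.prop _)
      ext k
      rw [Polynomial.coeff_zero]
      rcases Nat.lt_or_ge k (d + 1) with hk | hk
      · have hk' := congrFun hf ⟨k, hk⟩
        rw [ofCoeffs_apply, Finset.sum_mul, Polynomial.finsetSum_coeff]
        refine Eq.trans (Finset.sum_congr rfl fun i _ => ?_) hk'
        rw [← Polynomial.smul_X_eq_monomial, smul_mul_assoc, Polynomial.coeff_smul, smul_eq_mul,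
          mul_comm]
        rfl
      · refine Polynomial.coeff_eq_zero_of_natDegree_lt (lt_of_le_of_lt
          Polynomial.natDegree_mul_le ?_)
        omega
    refine ofCoeffs_injective _ ?_
    rw [map_zero]
    exact (mul_eq_zero.mp hprod).resolve_right hg
  have hrank := (shiftMat d r g).rank_transpose
  rw [Matrix.rank, LinearMap.finrank_range_of_inj hinj, Matrix.rank] at hrank
  have := LinearMap.range_eq_top.mp (Submodule.eq_top_of_finrank_eq hrank.symm)
  exact this

/-- Weighted sums of `r` moment curves. -/
def powerSums (d r : ℕ) : Set (Fin (d + 1) → ℂ) :=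
  {h | ∃ c z : Fin r → ℂ, ∀ k, h k = ∑ i, c i * z i ^ (k : ℕ)}

lemma mem_closure_powerSums {d r : ℕ} (hrd : r ≤ d) (h : Fin (d + 1) → ℂ) {g : Polynomial ℂ}
    (hg : g ≠ 0) (hgh : g ∈ annih (extend h) (d - r) r) : h ∈ closure (powerSums d r) := by
  have hr : g.natDegree ≤ r := natDegree_le_of_mem_degreeLT hgh.1
  obtain ⟨G, hGc, hG0, hG⟩ := exists_path_distinct_roots hg hr
  obtain ⟨R, hR⟩ := exists_shiftMat_mul_eq_one hrd hg hr
  have hMc : Continuous fun t => shiftMat d r (G t) := by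
    refine continuous_matrix fun i k => ?_
    simp only [shiftMat, Matrix.of_apply, Polynomial.coeff_X_pow_mul']
    split_ifs
    · exact hGc _
    · exact continuous_const
  set N : ℂ → Matrix (Fin (d - r + 1)) (Fin (d - r + 1)) ℂ := fun t => shiftMat d r (G t) * R
  have hNc : Continuous N := hMc.matrix_mul continuous_const
  -- Multiplying the projection onto `ker (shiftMat (G t))` by `det (N t)` avoids inverses.
  set Φ : ℂ → Fin (d + 1) → ℂ := fun t => (N t).det • h -
    R.mulVec ((N t).adjugate.mulVec ((shiftMat d r (G t)).mulVec h)) with hΦ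
  have hΦc : Continuous Φ := (hNc.matrix_det.smul continuous_const).sub
    (continuous_const.matrix_mulVec (hNc.matrix_adjugate.matrix_mulVec
      (hMc.matrix_mulVec continuous_const)))
  have hM0 : (shiftMat d r g).mulVec h = 0 := by
    ext i
    rw [shiftMat_mulVec]
    exact hgh.2 i (Nat.lt_succ_iff.mp i.2)
  have hΦ0 : Φ 0 = h := by
    simp only [hΦ, N, hG0, hR, hM0, Matrix.mulVec_zero, Matrix.det_one, one_smul, sub_zero]
  have hker : ∀ t, (shiftMat d r (G t)).mulVec (Φ t) = 0 := by
    intro t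
    simp only [hΦ]
    rw [Matrix.mulVec_sub, Matrix.mulVec_smul, Matrix.mulVec_mulVec, Matrix.mulVec_mulVec,
      Matrix.mul_adjugate, Matrix.smul_mulVec, Matrix.one_mulVec, sub_self]
  refine mem_closure_of_tendsto (b := 𝓝[≠] (0 : ℂ)) (f := Φ) ?_ ?_
  · have := hΦc.tendsto 0
    rw [hΦ0] at this
    exact this.mono_left nhdsWithin_le_nhds
  · filter_upwards [hG] with t ⟨c, hc, z, hz, hGt⟩
    obtain ⟨b, hb⟩ := exists_eq_sum_pow (a := extend (Φ t)) (d := d) hz fun i hi => by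
      have h1 := congrFun (hker t) ⟨i, Nat.lt_succ_of_le hi⟩
      rw [shiftMat_mulVec, hGt, mul_left_comm, Polynomial.C_mul', map_smul, smul_eq_mul] at h1
      exact (mul_eq_zero.mp h1).resolve_left hc
    refine ⟨b, z, fun k => ?_⟩
    rw [← hb k (Nat.lt_succ_iff.mp k.2), extend, dif_pos k.2]

lemma mem_closure_powerSums_rank {d : ℕ} (hd : 1 ≤ d) (h : Fin (d + 1) → ℂ) :
    h ∈ closure (powerSums d (hMat d (d / 2) h).rank) := by
  have hle := (hMat d (d / 2) h).rank_le_width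
  have hann := annih_rank_ne_bot (extend h) (d - d / 2) (d / 2) (by omega) (by omega) (by omega)
  rw [Nat.sub_add_cancel (Nat.div_le_self _ _)] at hann
  obtain ⟨g, hg, hg0⟩ := Submodule.exists_mem_ne_zero_of_ne_bot hann
  exact mem_closure_powerSums (by omega) h hg0 hg

lemma isClosed_rank_le {p q : ℕ} (r : ℕ) :
    IsClosed {A : Matrix (Fin p) (Fin q) ℂ | A.rank ≤ r} := by
  have hopen := isOpen_setOfPred_nat_le_rank (𝕜 := ℂ) (E := Fin q → ℂ) (F := Fin p → ℂ) (r + 1)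
  let Ψ : Matrix (Fin p) (Fin q) ℂ →ₗ[ℂ] ((Fin q → ℂ) →L[ℂ] (Fin p → ℂ)) :=
    LinearMap.toContinuousLinearMap.toLinearMap ∘ₗ Matrix.toLin'.toLinearMap
  have hΨ : Continuous Ψ := LinearMap.continuous_of_finiteDimensional _
  rw [← isOpen_compl_iff]
  convert hopen.preimage hΨ using 1
  ext A
  have : (Ψ A : (Fin q → ℂ) →ₗ[ℂ] (Fin p → ℂ)).rank = (A.rank : Cardinal) :=
    (Module.finrank_eq_rank ℂ (LinearMap.range A.mulVecLin)).symm
  simp only [Set.mem_compl_iff, Set.mem_ofPred_eq, not_le, Set.mem_preimage, this, Nat.cast_le]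
  exact Nat.lt_iff_add_one_le

lemma exists_index_sum {n : ℕ} (hn : 1 ≤ n) (m k : ℕ) (hk : k ≤ (n - 1) * m) :
    ∃ i : Fin m → Fin n, ∑ j, (i j : ℕ) = k := by
  induction m generalizing k with
  | zero => exact ⟨Fin.elim0, by simp at hk ⊢; omega⟩
  | succ m ih =>
    rw [Nat.mul_succ] at hk
    obtain ⟨i, hi⟩ := ih (k - min k (n - 1)) (by omega)
    refine ⟨Fin.cons ⟨min k (n - 1), by omega⟩ i, ?_⟩
    rw [Fin.sum_univ_succ]
    simp only [Fin.cons_zero, Fin.cons_succ, hi]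
    omega

lemma prod_vand {m n : ℕ} (a b : ℂ) (i : Fin m → Fin n) :
    ∏ j, vand n a b (i j) = a ^ ((n - 1) * m - ∑ j, (i j : ℕ)) * b ^ ∑ j, (i j : ℕ) := by
  simp only [vand, Finset.prod_mul_distrib, Finset.prod_pow_eq_pow_sum]
  congr 2
  rw [Finset.sum_tsub_distrib _ fun j _ => show (i j : ℕ) ≤ n - 1 by omega]
  simp [mul_comm]

lemma rank_le_of_mem_closure {m n r : ℕ} (hn : 1 ≤ n) {H : Tensor m n}
    {h : Fin ((n - 1) * m + 1) → ℂ} (hH : IsHankel H h) (hr : H ∈ closure (vandSet m n r))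
    (s : ℕ) (hs : s ≤ (n - 1) * m) : (hMat ((n - 1) * m) s h).rank ≤ r := by
  have hidx : ∀ k : Fin ((n - 1) * m + 1), ∃ i : Fin m → Fin n, ∑ j, (i j : ℕ) = k :=
    fun k => exists_index_sum hn m k (Nat.lt_succ_iff.mp k.2)
  choose I hI using hidx
  have hlt : ∀ (i : Fin ((n - 1) * m - s + 1)) (j : Fin (s + 1)),
      (i : ℕ) + j < (n - 1) * m + 1 := fun i j => by omega
  set E : Tensor m n → Matrix (Fin ((n - 1) * m - s + 1)) (Fin (s + 1)) ℂ :=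
    fun T => Matrix.of fun i j => T (I ⟨i + j, hlt i j⟩) with hE
  have hEc : Continuous E := continuous_matrix fun i j => continuous_apply _
  have hEH : E H = hMat ((n - 1) * m) s h := by
    ext i j
    simp only [hE, hMat, Matrix.of_apply, dif_pos (hlt i j)]
    rw [hH]
    congr 1
    exact Fin.ext (hI _)
  rw [← hEH]
  refine (closure_minimal ?_ ((isClosed_rank_le r).preimage hEc)) hr
  rintro T ⟨ab, hT⟩
  set A : Matrix (Fin ((n - 1) * m - s + 1)) (Fin r) ℂ :=
    Matrix.of fun i k => (ab k).1 ^ ((n - 1) * m - s - i) * (ab k).2 ^ (i : ℕ) with hA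
  set B : Matrix (Fin r) (Fin (s + 1)) ℂ :=
    Matrix.of fun k j => (ab k).1 ^ (s - j : ℕ) * (ab k).2 ^ (j : ℕ) with hB
  have hAB : E T = A * B := by
    ext i j
    simp only [hE, hA, hB, Matrix.mul_apply, Matrix.of_apply, hT, prod_vand, hI]
    refine Finset.sum_congr rfl fun k _ => ?_
    rw [show (n - 1) * m - (i + j : ℕ) = ((n - 1) * m - s - i) + (s - j) by omega, pow_add, pow_add]
    ring
  rw [Set.mem_preimage, Set.mem_ofPred_eq, hAB]
  exact (Matrix.rank_mul_le_left A B).trans A.rank_le_width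

lemma mem_closure_vandSet {m n r : ℕ} (hd : 1 ≤ (n - 1) * m) {H : Tensor m n}
    {h : Fin ((n - 1) * m + 1) → ℂ} (hH : IsHankel H h)
    (hr : h ∈ closure (powerSums ((n - 1) * m) r)) : H ∈ closure (vandSet m n r) := by
  have hle : ∀ i : Fin m → Fin n, ∑ j, (i j : ℕ) ≤ (n - 1) * m := fun i => by
    calc ∑ j, (i j : ℕ) ≤ ∑ _j : Fin m, (n - 1) :=
          Finset.sum_le_sum fun j _ => Nat.le_pred_of_lt (i j).isLt
      _ = (n - 1) * m := by simp [mul_comm]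
  set F : (Fin ((n - 1) * m + 1) → ℂ) → Tensor m n :=
    fun x i => x ⟨∑ j, (i j : ℕ), Nat.lt_succ_of_le (hle i)⟩ with hF
  have hFc : Continuous F := continuous_pi fun i => continuous_apply _
  have hFH : F h = H := funext fun i => (hH i).symm
  rw [← hFH]
  refine map_mem_closure hFc hr ?_
  rintro x ⟨c, z, hx⟩
  choose α hα using fun i => IsAlgClosed.exists_pow_nat_eq (c i) (show 0 < (n - 1) * m from hd)
  refine ⟨fun k => (α k, α k * z k), fun i => ?_⟩
  simp only [hF, hx, prod_vand]
  refine Finset.sum_congr rfl fun k _ => ?_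
  rw [mul_pow, ← mul_assoc, ← pow_add, Nat.sub_add_cancel (hle i), hα]

end HankelBorder

/-- For a Hankel tensor `H` with parameter vector `h`,
`brank_V(H) = rank C_{d-s,s}(h)` with `s = ⌊d/2⌋`. -/
theorem stmt_17 (n m : ℕ) (hn : 2 ≤ n) (hm : 1 ≤ m)
    (H : Tensor m n) (h : Fin ((n - 1) * m + 1) → ℂ) (hH : IsHankel H h) :
    bVandRank H = (hMat ((n - 1) * m) ((n - 1) * m / 2) h).rank := by
  have hd : 1 ≤ (n - 1) * m := Nat.mul_pos (by omega) hm
  have hmem := HankelBorder.mem_closure_vandSet hd hH (HankelBorder.mem_closure_powerSums_rank hd h)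
  exact le_antisymm (Nat.sInf_le hmem) (le_csInf ⟨_, hmem⟩ fun k hk =>
    HankelBorder.rank_le_of_mem_closure (by omega) hH hk _ (Nat.div_le_self _ _))
end
end

section
/- Let m ≥ 2 and let H be the Hankel tensor of order m and dimension 3 whose parameter vector h ∈ ℂ^{2m+1} is given by h_1 = h_{2m} = 1 and h_l = 0 for all l ∉ {1, 2m} (this is the Hankel tensor associated with the form m·x^{m−1}y + z^m). Then rank_V(H) = 2m − 1. -/
open scoped BigOperators
open MvPolynomial

noncomputable section

/-- A product of Vandermonde entries depends only on the sum of the indices. -/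
lemma prod_vand (m n : ℕ) (a b : ℂ) (i : Fin m → Fin n) :
    ∏ j, vand n a b (i j) = a ^ ((n - 1) * m - ∑ j, (i j : ℕ)) * b ^ (∑ j, (i j : ℕ)) := by
  have hle : ∀ j, (i j : ℕ) ≤ n - 1 := fun j => Nat.le_pred_of_lt (i j).isLt
  have hsum : ∑ j, (n - 1 - (i j : ℕ)) = (n - 1) * m - ∑ j, (i j : ℕ) := by
    rw [Finset.sum_tsub_distrib _ fun j _ => hle j]
    simp [mul_comm]
  simp only [vand, Finset.prod_mul_distrib, Finset.prod_pow_eq_pow_sum, hsum]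

/-- Every `l ≤ 2 * m` is a sum of `m` indices in `Fin 3`. -/
lemma exists_index_sum_eq (m l : ℕ) (hl : l ≤ 2 * m) :
    ∃ i : Fin m → Fin 3, ∑ j, (i j : ℕ) = l := by
  induction m generalizing l with
  | zero => exact ⟨Fin.elim0, by simp; omega⟩
  | succ m ih =>
    obtain ⟨i, hi⟩ := ih (l - 2) (by omega)
    refine ⟨Fin.cons ⟨min l 2, by omega⟩ i, ?_⟩
    simp only [Fin.sum_univ_succ, Fin.cons_zero, Fin.cons_succ, hi]
    omega

/-- Membership of a dimension-three Hankel tensor in `vandSet` is a system of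
power-sum equations for its parameter vector. -/
lemma IsHankel.mem_vandSet_iff {m r : ℕ} {H : Tensor m 3} {g : ℕ → ℂ}
    (hH : IsHankel H fun l : Fin ((3 - 1) * m + 1) => g l) :
    H ∈ vandSet m 3 r ↔ ∃ ab : Fin r → ℂ × ℂ, ∀ l ≤ 2 * m,
      g l = ∑ k, (ab k).1 ^ (2 * m - l) * (ab k).2 ^ l := by
  simp only [vandSet, Set.mem_ofPred_eq, prod_vand]
  refine exists_congr fun ab => ⟨fun h l hl => ?_, fun h i => ?_⟩
  · obtain ⟨i, rfl⟩ := exists_index_sum_eq m l hl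
    exact (hH i).symm.trans (h i)
  · refine (hH i).trans (h _ ?_)
    calc ∑ j, (i j : ℕ) ≤ ∑ _j : Fin m, 2 := Finset.sum_le_sum fun j _ => by omega
      _ = 2 * m := by simp [mul_comm]

/-- If `h₀, …, h_{d-1}` are power sums of `r` points and `h` vanishes below `d` except at `1`,
then `r ≥ d - 1`. -/
lemma le_of_powerSum_eq {d r : ℕ} (hd : 2 ≤ d) (ab : Fin r → ℂ × ℂ)
    (h : ∀ l < d, (if l = 1 then (1 : ℂ) else 0) = ∑ k, (ab k).1 ^ (d - l) * (ab k).2 ^ l) :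
    d - 1 ≤ r := by
  by_contra! hr
  let P : Polynomial ℂ := ∏ k, if (ab k).2 / (ab k).1 = 0 then 1
    else Polynomial.X - Polynomial.C ((ab k).2 / (ab k).1)
  have hP0 : P.coeff 0 ≠ 0 := by
    rw [Polynomial.coeff_zero_eq_eval_zero, Polynomial.eval_prod, Finset.prod_ne_zero_iff]
    intro k _
    split_ifs with hk <;> simp_all
  have hPdeg : P.natDegree ≤ r := by
    refine (Polynomial.natDegree_prod_le _ _).trans ?_
    refine (Finset.sum_le_card_nsmul _ _ 1 fun k _ => ?_).trans (by simp)
    split_ifs <;> simp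
  have hQdeg : (Polynomial.X * P).natDegree < d := by
    have := Polynomial.natDegree_mul_le (p := Polynomial.X) (q := P)
    rw [Polynomial.natDegree_X] at this
    omega
  have hroot : ∀ k, (Polynomial.X * P).eval ((ab k).2 / (ab k).1) = 0 := by
    intro k
    rw [Polynomial.eval_mul, Polynomial.eval_X]
    by_cases hk : (ab k).2 / (ab k).1 = 0
    · rw [hk, zero_mul]
    · rw [Polynomial.eval_prod, Finset.prod_eq_zero (Finset.mem_univ k), mul_zero]
      simp only [if_neg hk, Polynomial.eval_sub, Polynomial.eval_X, Polynomial.eval_C, sub_self]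
  have hzero : ∀ k, ∑ l ∈ Finset.range d,
      (Polynomial.X * P).coeff l * ((ab k).1 ^ (d - l) * (ab k).2 ^ l) = 0 := by
    intro k
    by_cases ha : (ab k).1 = 0
    · refine Finset.sum_eq_zero fun l hl => ?_
      have : d - l ≠ 0 := by have := Finset.mem_range.1 hl; omega
      rw [ha, zero_pow this, zero_mul, mul_zero]
    · have := hroot k
      rw [Polynomial.eval_eq_sum_range' hQdeg] at this
      rw [← mul_zero ((ab k).1 ^ d), ← this, Finset.mul_sum]
      refine Finset.sum_congr rfl fun l hl => ?_
      rw [pow_sub₀ _ ha (Finset.mem_range.1 hl).le, div_pow]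
      ring
  have hcoeff : ∑ l ∈ Finset.range d,
      (Polynomial.X * P).coeff l * (if l = 1 then (1 : ℂ) else 0) = P.coeff 0 := by
    simp only [mul_ite, mul_one, mul_zero, Finset.sum_ite_eq', Finset.mem_range]
    rw [if_pos (by omega), Polynomial.coeff_X_mul P 0]
  apply hP0
  rw [← hcoeff, Finset.sum_congr rfl fun l hl => by rw [h l (Finset.mem_range.1 hl)]]
  simp only [Finset.mul_sum]
  rw [Finset.sum_comm]
  exact Finset.sum_eq_zero fun k _ => hzero k

/-- The sum of the `k`-th powers of an `N`-th root of unity `ζ ^ l`, `ζ` primitive. -/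
lemma IsPrimitiveRoot.sum_pow_pow {ζ : ℂ} {N : ℕ} (hζ : IsPrimitiveRoot ζ N) (l : ℕ) :
    ∑ k : Fin N, (ζ ^ l) ^ (k : ℕ) = if N ∣ l then (N : ℂ) else 0 := by
  rw [Fin.sum_univ_eq_sum_range (fun k => (ζ ^ l) ^ k)]
  split_ifs with hl
  · simp [(hζ.pow_eq_one_iff_dvd l).2 hl]
  · have h1 : ζ ^ l ≠ 1 := fun h => hl ((hζ.pow_eq_one_iff_dvd l).1 h)
    rw [geom_sum_eq h1, ← pow_mul, mul_comm, pow_mul, hζ.pow_eq_one]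
    simp

/-- The vector `e₁ + e_d` consists of power sums of `d - 1` points. -/
lemma exists_powerSum_eq (N : ℕ) (hN : 2 ≤ N) :
    ∃ ab : Fin N → ℂ × ℂ, ∀ l ≤ N + 1, (if l = 1 ∨ l = N + 1 then (1 : ℂ) else 0) =
      ∑ k, (ab k).1 ^ (N + 1 - l) * (ab k).2 ^ l := by
  have hN0 : (N : ℂ) ≠ 0 := by exact_mod_cast (by omega : N ≠ 0)
  have hζ := Complex.isPrimitiveRoot_exp N (by omega)
  set ζ := Complex.exp (2 * Real.pi * Complex.I / N)
  choose a ha using fun k : Fin N => IsAlgClosed.exists_pow_nat_eq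
    ((ζ ^ (N - 1)) ^ (k : ℕ) / N) N.succ_pos
  refine ⟨fun k => (a k, ζ ^ (k : ℕ) * a k), fun l hl => ?_⟩
  have hterm : ∀ k : Fin N, a k ^ (N + 1 - l) * (ζ ^ (k : ℕ) * a k) ^ l =
      (ζ ^ (N - 1 + l)) ^ (k : ℕ) / N := by
    intro k
    calc a k ^ (N + 1 - l) * (ζ ^ (k : ℕ) * a k) ^ l
        = a k ^ (N + 1 - l + l) * (ζ ^ (k : ℕ)) ^ l := by ring
      _ = (ζ ^ (N - 1 + l)) ^ (k : ℕ) / N := by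
        rw [Nat.sub_add_cancel hl, ha]
        ring
  have hdvd : N ∣ N - 1 + l ↔ l = 1 ∨ l = N + 1 := by
    constructor
    · rintro ⟨c, hc⟩
      have hc0 : 0 < c := by
        rcases Nat.eq_zero_or_pos c with rfl | h
        · omega
        · exact h
      have hc3 : c < 3 := by
        by_contra! h
        have := Nat.mul_le_mul_left N h
        omega
      interval_cases c <;> omega
    · rintro (rfl | rfl)
      · exact ⟨1, by omega⟩
      · exact ⟨2, by omega⟩
  simp only [hterm]
  rw [← Finset.sum_div, hζ.sum_pow_pow]
  simp only [hdvd]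
  split_ifs <;> simp [hN0]

/-- The Hankel tensor of order `m ≥ 2` and dimension 3 associated with
the form `m·x^(m-1)y + z^m` has Vandermonde rank `2m-1`. -/
theorem stmt_18 (m : ℕ) (hm : 2 ≤ m) (H : Tensor m 3)
    (hH : IsHankel H (fun l : Fin ((3 - 1) * m + 1) =>
      if (l : ℕ) = 1 ∨ (l : ℕ) = 2 * m then 1 else 0)) :
    vandRank H = 2 * m - 1 := by
  have hmem := fun r => hH.mem_vandSet_iff (r := r)
    (g := fun l => if l = 1 ∨ l = 2 * m then 1 else 0)
  have hupper : H ∈ vandSet m 3 (2 * m - 1) := by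
    obtain ⟨ab, hab⟩ := exists_powerSum_eq (2 * m - 1) (by omega)
    rw [Nat.sub_add_cancel (by omega)] at hab
    exact (hmem _).2 ⟨ab, hab⟩
  refine le_antisymm (Nat.sInf_le hupper) (le_csInf ⟨_, hupper⟩ fun r hr => ?_)
  obtain ⟨ab, hab⟩ := (hmem r).1 hr
  refine le_of_powerSum_eq (by omega) ab fun l hl => ?_
  rw [← hab l hl.le]
  simp [hl.ne]
end
end
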